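/- arXiv:0912.1361 — 3 statements merged into one kernel-verified Lean document; each statement's English description precedes it below -/
import Mathlib

section
/- For every n ≥ 0, the number of simsun permutations of {1,…,n} equals E_{n+1}, the (n+1)-st Euler number, i.e., the number of up-down permutations of {1,…,n+1}. -/
/-- `π` is simsun: for every `k`, the subword of the one-line notation of `π`
consisting of the `k` smallest entries (i.e. the values `< k`, in 0-based form)
contains no three consecutive decreasing elements.  Here "three consecutive
decreasing elements of the subword" means positions `a < b < c` whose values are
all `< k`, with no position carrying a value `< k` strictly between `a` and `b`
nor strictly between `b` and `c`, and with `π a > π b > π c`. -/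
def IsSimsun {n : ℕ} (π : Equiv.Perm (Fin n)) : Prop :=
  ∀ k : ℕ, ¬ ∃ a b c : Fin n, a < b ∧ b < c ∧
    (π a : ℕ) < k ∧ (π b : ℕ) < k ∧ (π c : ℕ) < k ∧
    (∀ m : Fin n, a < m → m < b → k ≤ (π m : ℕ)) ∧
    (∀ m : Fin n, b < m → m < c → k ≤ (π m : ℕ)) ∧
    (π c : ℕ) < (π b : ℕ) ∧ (π b : ℕ) < (π a : ℕ)

/-- `π` is an up-down permutation: `π 1 < π 2 > π 3 < π 4 > ⋯`
(0-based: ascents at even positions, descents at odd positions). -/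
def IsUpDown {m : ℕ} (π : Equiv.Perm (Fin m)) : Prop :=
  ∀ (i : ℕ) (h : i + 1 < m),
    if i % 2 = 0 then π ⟨i, by omega⟩ < π ⟨i + 1, h⟩
    else π ⟨i + 1, h⟩ < π ⟨i, by omega⟩

open Finset Equiv PowerSeries

/-! The Entringer numbers form the Seidel triangle, and rotating its rows and columns by an angle
shows that the exponential generating function `h` of the Euler numbers satisfies
`cos * h = 1 + sin`.  Hence `h'' = h * h'`.  Differentiating a product
`h' ^ (d + 1) * h ^ (n - 2 * d)` by means of this equation gives `d + 1` terms with the same `d`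
and `n - 2 * d` terms with `d + 1` in place of `d`; these are exactly the ways of inserting a new
maximum into a simsun permutation of length `n` with `d` descents.  So the derivative of order
`n + 1` of `h` is the sum of such products over the simsun permutations of length `n`, and
evaluating at `0`, where `h = h' = 1`, counts them. -/

/-! ### Inserting an entry into a permutation -/

section insertEntry

variable {n : ℕ}

/-- The permutation with value `v` at position `p` whose other entries are in the same relative
order as those of `π`. -/
def insertEntry (p v : Fin (n + 1)) (π : Perm (Fin n)) : Perm (Fin (n + 1)) :=
  (finSuccEquiv' p).trans ((optionCongr π).trans (finSuccEquiv' v).symm)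

@[simp]
theorem insertEntry_self (p v : Fin (n + 1)) (π : Perm (Fin n)) : insertEntry p v π p = v := by
  simp [insertEntry]

@[simp]
theorem insertEntry_succAbove (p v : Fin (n + 1)) (π : Perm (Fin n)) (i : Fin n) :
    insertEntry p v π (p.succAbove i) = v.succAbove (π i) := by
  simp [insertEntry]

theorem insertEntry_injective (p v : Fin (n + 1)) : Function.Injective (insertEntry p v) := by
  intro π π' h
  ext i : 1
  have := congr($h (p.succAbove i))
  simpa using this

theorem exists_insertEntry_eq (p : Fin (n + 1)) (σ : Perm (Fin (n + 1))) :
    ∃ π, insertEntry p (σ p) π = σ := by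
  have hne (i : Fin n) : σ (p.succAbove i) ≠ σ p := σ.injective.ne (p.succAbove_ne i)
  choose f hf using fun i => Fin.exists_succAbove_eq (hne i)
  have f_inj : Function.Injective f := fun i j hij =>
    Fin.succAbove_right_injective (σ.injective (by rw [← hf, ← hf, hij]))
  refine ⟨.ofBijective f (Finite.injective_iff_bijective.1 f_inj), ?_⟩
  ext x : 1
  rcases Fin.eq_self_or_eq_succAbove p x with rfl | ⟨i, rfl⟩ <;> simp [hf]

theorem insertEntry_bijective (v : Fin (n + 1)) :
    Function.Bijective fun x : Fin (n + 1) × Perm (Fin n) => insertEntry x.1 v x.2 := by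
  constructor
  · rintro ⟨p, π⟩ ⟨q, π'⟩ (h : insertEntry p v π = insertEntry q v π')
    obtain rfl : p = q := (insertEntry q v π').injective <| by
      rw [insertEntry_self, ← h, insertEntry_self]
    rw [insertEntry_injective p v h]
  · intro σ
    obtain ⟨π, hπ⟩ := exists_insertEntry_eq (σ.symm v) σ
    exact ⟨(σ.symm v, π), by simpa using hπ⟩

end insertEntry

/-! ### Entringer numbers -/

section Entringer

/-- The Euler zigzag number `E_n`: the number of up-down permutations of length `n`. -/
noncomputable def eulerNumber (n : ℕ) : ℕ := Nat.card {π : Perm (Fin n) // IsUpDown π}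

open Classical in
/-- The Entringer number `E_{n,k}`: the number of up-down permutations of length `n` whose first
entry, if there is one, is among the `k` smallest values. -/
noncomputable def entringer (n k : ℕ) : ℕ :=
  #{π : Perm (Fin n) | IsUpDown π ∧ ∀ i : Fin n, (i : ℕ) = 0 → (π i : ℕ) < k}

theorem entringer_self (n : ℕ) : entringer n n = eulerNumber n := by
  classical
  rw [eulerNumber, Nat.card_eq_fintype_card, Fintype.card_subtype]
  simp [entringer]

theorem entringer_zero_left (k : ℕ) : entringer 0 k = 1 := by
  simp [entringer, IsUpDown]

open Classical in
theorem entringer_succ_left (n k : ℕ) :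
    entringer (n + 1) k = #{π : Perm (Fin (n + 1)) | IsUpDown π ∧ (π 0 : ℕ) < k} := by
  have val_eq_zero (i : Fin (n + 1)) : (i : ℕ) = 0 ↔ i = 0 := Fin.val_eq_zero_iff
  simp only [entringer, val_eq_zero, forall_eq]

theorem entringer_succ_zero (n : ℕ) : entringer (n + 1) 0 = 0 := by
  simp [entringer_succ_left]

/-- Complementing the tail exchanges its ascents and descents, so that prepending an entry yields an
up-down permutation again. -/
theorem isUpDown_insertEntry_zero_iff {n : ℕ} (v : Fin (n + 1)) (π : Perm (Fin n)) :
    IsUpDown (insertEntry 0 v (π.trans Fin.revPerm)) ↔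
      IsUpDown π ∧ ∀ i : Fin n, (i : ℕ) = 0 → (π i : ℕ) < n - v := by
  set σ := insertEntry 0 v (π.trans Fin.revPerm)
  have σ_zero : σ 0 = v := insertEntry_self ..
  have σ_succ (i : Fin n) : σ i.succ = v.succAbove (π i).rev := by
    simpa using insertEntry_succAbove 0 v (π.trans Fin.revPerm) i
  have first_step (i : Fin n) : σ 0 < σ i.succ ↔ (π i : ℕ) < n - v := by
    rw [σ_zero, σ_succ, Fin.lt_succAbove_iff_le_castSucc, Fin.le_def, Fin.val_castSucc, Fin.val_rev]
    omega
  have later_step (i j : Fin n) : σ i.succ < σ j.succ ↔ π j < π i := by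
    rw [σ_succ, σ_succ, Fin.succAbove_lt_succAbove_iff, Fin.rev_lt_rev]
  have parity (i : ℕ) : (i + 1) % 2 = 0 ↔ ¬ i % 2 = 0 := by omega
  constructor
  · intro hσ
    refine ⟨fun i hi => ?_, ?_⟩
    · have := hσ (i + 1) (by omega)
      simp only [parity, ite_not] at this
      split_ifs at this ⊢
      · exact (later_step ⟨i + 1, hi⟩ ⟨i, by omega⟩).1 this
      · exact (later_step ⟨i, by omega⟩ ⟨i + 1, hi⟩).1 this
    · rintro ⟨_, hi⟩ rfl
      exact (first_step _).1 (hσ 0 (by omega))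
  · rintro ⟨hπ, hv⟩ (_ | i) hi
    · exact (first_step ⟨0, by omega⟩).2 (hv _ rfl)
    · have := hπ i (by omega)
      simp only [parity, ite_not]
      split_ifs at this ⊢
      · exact (later_step ⟨i + 1, by omega⟩ ⟨i, by omega⟩).2 this
      · exact (later_step ⟨i, by omega⟩ ⟨i + 1, by omega⟩).2 this

open Classical in
theorem card_isUpDown_apply_zero_eq {n : ℕ} (v : Fin (n + 1)) :
    #{σ : Perm (Fin (n + 1)) | IsUpDown σ ∧ σ 0 = v} = entringer n (n - v) := by
  symm
  refine card_bij (fun π _ => insertEntry 0 v (π.trans Fin.revPerm)) ?_ ?_ ?_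
  · intro π hπ
    simpa [isUpDown_insertEntry_zero_iff] using hπ
  · intro π _ π' _ h
    exact mul_left_cancel (insertEntry_injective 0 v h : Fin.revPerm * π = Fin.revPerm * π')
  · intro σ hσ
    obtain ⟨σ_upDown, rfl⟩ := (mem_filter_univ σ).1 hσ
    obtain ⟨π, hπ⟩ := exists_insertEntry_eq 0 σ
    obtain ⟨π, rfl⟩ : ∃ π', π = π'.trans Fin.revPerm := ⟨π.trans Fin.revPerm, by ext; simp⟩
    rw [← hπ, isUpDown_insertEntry_zero_iff] at σ_upDown
    exact ⟨π, (mem_filter_univ π).2 σ_upDown, hπ⟩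

theorem eulerNumber_zero : eulerNumber 0 = 1 := by
  rw [← entringer_self, entringer_zero_left]

theorem entringer_succ_succ (i j : ℕ) :
    entringer (i + j + 1) (i + 1) = entringer (i + j + 1) i + entringer (i + j) j := by
  classical
  have first_eq := card_isUpDown_apply_zero_eq (⟨i, by omega⟩ : Fin (i + j + 1))
  rw [show i + j - i = j by omega] at first_eq
  rw [← first_eq, entringer_succ_left, entringer_succ_left, ← card_union_of_disjoint]
  · simp only [← filter_or, Fin.ext_iff, Nat.lt_succ_iff_lt_or_eq, and_or_left]
  · rw [disjoint_filter]
    rintro σ - ⟨-, hlt⟩ ⟨-, heq⟩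
    simp [heq] at hlt

theorem eulerNumber_one : eulerNumber 1 = 1 := by
  rw [← entringer_self, entringer_succ_succ 0 0, entringer_succ_zero, entringer_zero_left]

end Entringer

/-! ### The exponential generating function of the Euler numbers -/

section Trigonometric

variable (A : Type*) [CommRing A] [Algebra ℚ A]

theorem algebraMap_div_factorial_succ_mul (q : ℚ) (n : ℕ) :
    algebraMap ℚ A (q / (n + 1).factorial) * (n + 1) = algebraMap ℚ A (q / n.factorial) := by
  have hn : (n + 1 : ℚ) ≠ 0 := n.cast_add_one_ne_zero
  have hfac : (n.factorial : ℚ) ≠ 0 := mod_cast n.factorial_ne_zero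
  rw [← Nat.cast_add_one, ← map_natCast (algebraMap ℚ A), ← map_mul, Nat.factorial_succ,
    Nat.cast_mul, Nat.cast_add_one]
  congr 1
  field_simp

theorem derivative_sin : d⁄dX A (sin A) = cos A := by
  ext n
  rw [coeff_derivative, sin, cos, coeff_mk, coeff_mk]
  rcases Nat.even_or_odd' n with ⟨m, rfl | rfl⟩
  · rw [if_neg (by simp), if_pos (by simp), algebraMap_div_factorial_succ_mul,
      show (2 * m + 1) / 2 = 2 * m / 2 by omega]
  · simp [Nat.even_add_one]

theorem derivative_cos : d⁄dX A (cos A) = -sin A := by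
  ext n
  rw [coeff_derivative, map_neg, sin, cos, coeff_mk, coeff_mk]
  rcases Nat.even_or_odd' n with ⟨m, rfl | rfl⟩
  · simp
  · rw [if_pos (by simp [Nat.even_add_one]), if_neg (by simp), algebraMap_div_factorial_succ_mul,
      show (2 * m + 1 + 1) / 2 = (2 * m + 1) / 2 + 1 by omega, pow_succ, mul_neg_one, neg_div,
      map_neg]

theorem constantCoeff_sin : constantCoeff (sin A) = 0 := by
  simp [sin, ← coeff_zero_eq_constantCoeff_apply]

theorem constantCoeff_cos : constantCoeff (cos A) = 1 := by
  simp [cos, ← coeff_zero_eq_constantCoeff_apply]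

theorem cos_sq_add_sin_sq : cos A ^ 2 + sin A ^ 2 = 1 := by
  have := IsAddTorsionFree.of_module_rat A
  refine derivative.ext ?_ ?_
  · rw [map_add, derivative_pow, derivative_pow, derivative_sin, derivative_cos, derivative_one]
    ring
  · simp [constantCoeff_sin, constantCoeff_cos]

end Trigonometric

section ExponentialGeneratingFunction

variable {K : Type*} [Field K]

/-- The exponential generating function `∑ aₙ Xⁿ / n!` of a sequence `a`. -/
def egf (a : ℕ → K) : K⟦X⟧ := mk fun n => a n / n.factorial

theorem egf_add (a b : ℕ → K) : egf (fun n => a n + b n) = egf a + egf b := by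
  ext n
  simp [egf, add_div]

variable [CharZero K]

theorem derivative_egf (a : ℕ → K) : d⁄dX K (egf a) = egf fun n => a (n + 1) := by
  ext n
  have hn : (n + 1 : K) ≠ 0 := n.cast_add_one_ne_zero
  have hfac : (n.factorial : K) ≠ 0 := mod_cast n.factorial_ne_zero
  simp only [coeff_derivative, egf, coeff_mk, Nat.factorial_succ, Nat.cast_mul, Nat.cast_add_one]
  field_simp

theorem eq_egf_iff (f : K⟦X⟧) (a : ℕ → K) :
    f = egf a ↔ ∀ n, constantCoeff ((d⁄dX K)^[n] f) = a n := by
  have hfac (n : ℕ) : (n.factorial : K) ≠ 0 := mod_cast n.factorial_ne_zero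
  simp_rw [PowerSeries.ext_iff, constantCoeff_iterate_derivative, egf, coeff_mk,
    eq_div_iff (hfac _), mul_comm]

theorem constantCoeff_iterate_derivative_egf (a : ℕ → K) (n : ℕ) :
    constantCoeff ((d⁄dX K)^[n] (egf a)) = a n :=
  (eq_egf_iff _ a).1 rfl n

/-- The rotated series `cos * egf (t · j) - sin * egf (t j ·)` form a chain under differentiation,
so the Taylor coefficients of the first one are the constant coefficients of all of them. -/
theorem cos_mul_egf_eq_of_seidel (t : ℕ → ℕ → K) (ht : ∀ i j, t (i + 1) j = t i (j + 1) + t j i) :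
    cos K * egf (fun i => t i 0) = (1 + sin K) * egf (t 0) := by
  set column : ℕ → K⟦X⟧ := fun j => egf fun i => t i j
  set row : ℕ → K⟦X⟧ := fun j => egf (t j)
  set rotated : ℕ → K⟦X⟧ := fun j => cos K * column j - sin K * row j with rotated_def
  have derivative_column (j : ℕ) : d⁄dX K (column j) = column (j + 1) + row j := by
    simp only [column, row, derivative_egf, ht, egf_add]
  have derivative_row (j : ℕ) : d⁄dX K (row j) = row (j + 1) - column j := by
    simp only [column, row, derivative_egf, eq_sub_iff_add_eq, ← egf_add, ← ht]
  have derivative_rotated (j : ℕ) : d⁄dX K (rotated j) = rotated (j + 1) := by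
    simp only [rotated_def, map_sub, Derivation.leibniz, derivative_column, derivative_row,
      derivative_sin, derivative_cos, smul_eq_mul]
    ring
  have iterate_derivative_rotated (n : ℕ) : (d⁄dX K)^[n] (rotated 0) = rotated n := by
    induction n with
    | zero => rfl
    | succ n ih => rw [Function.iterate_succ_apply', ih, derivative_rotated]
  have rotated_zero : rotated 0 = egf (t 0) := (eq_egf_iff _ _).2 fun n => by
    have constantCoeff_column := constantCoeff_iterate_derivative_egf (fun i => t i n) 0
    simp_all [constantCoeff_sin, constantCoeff_cos, column]
  linear_combination rotated_zero

/-- Since `h = sec + tan = cos / (1 - sin)`, its derivative is `h' = 1 / (1 - sin)`. -/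
theorem derivative_derivative_eq_of_cos_mul_eq {h : K⟦X⟧} (hh : cos K * h = 1 + sin K) :
    d⁄dX K (d⁄dX K h) = h * d⁄dX K h := by
  have cos_ne_zero : cos K ≠ 0 := fun H => by simpa [H] using constantCoeff_cos K
  have one_sub_sin_ne_zero : 1 - sin K ≠ 0 := fun H => by
    simpa [constantCoeff_sin] using congr(constantCoeff $H)
  have h₀ : (1 - sin K) * h = cos K := mul_left_cancel₀ cos_ne_zero <| by
    linear_combination (1 - sin K) * hh - cos_sq_add_sin_sq K
  have h₁ : (1 - sin K) * d⁄dX K h = 1 := by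
    have := congr(d⁄dX K $h₀)
    simp only [Derivation.leibniz, map_sub, derivative_one, derivative_sin, derivative_cos,
      smul_eq_mul] at this
    linear_combination this + hh
  have h₂ : (1 - sin K) * d⁄dX K (d⁄dX K h) = cos K * d⁄dX K h := by
    have := congr(d⁄dX K $h₁)
    simp only [Derivation.leibniz, map_sub, derivative_one, derivative_sin, smul_eq_mul] at this
    linear_combination this
  exact mul_left_cancel₀ one_sub_sin_ne_zero <| by
    linear_combination h₂ - d⁄dX K h * h₀

variable (K)

/-- André's theorem: `∑ Eₙ Xⁿ / n! = sec + tan`. -/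
theorem cos_mul_egf_eulerNumber : cos K * egf (fun n => (eulerNumber n : K)) = 1 + sin K := by
  have seidel (i j : ℕ) : entringer (i + 1 + j) (i + 1) =
      entringer (i + (j + 1)) i + entringer (j + i) j := by
    rw [add_right_comm, entringer_succ_succ, add_comm j i, add_assoc]
  have row_zero : egf (fun j => (entringer (0 + j) 0 : K)) = 1 := by
    ext (_ | j) <;> simp [egf, entringer_zero_left, entringer_succ_zero, coeff_one]
  have := cos_mul_egf_eq_of_seidel (fun i j => (entringer (i + j) i : K))
    fun i j => mod_cast seidel i j
  simpa only [add_zero, entringer_self, row_zero, mul_one] using this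

end ExponentialGeneratingFunction

/-! ### Descents of simsun permutations -/

section Simsun

variable {n : ℕ}

/-- The descent set `{i | π_i > π_{i+1}}`. -/
def descents (π : Perm (Fin n)) : Finset (Fin n) :=
  {i | ∃ j : Fin n, (i : ℕ) + 1 = j ∧ π j < π i}

/-- No two elements of `D` are consecutive.  For a descent set, this says that there is no double
descent. -/
def NoConsecutive (D : Finset (Fin n)) : Prop := ∀ i ∈ D, ∀ j ∈ D, (i : ℕ) + 1 ≠ j

/-- The entries at the positions `a` and `b` form a descent of the subword of the values `< k`. -/
def IsDescentBelow (π : Perm (Fin n)) (k : ℕ) (a b : Fin n) : Prop :=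
  a < b ∧ π b < π a ∧ (π a : ℕ) < k ∧ ∀ m, a < m → m < b → k ≤ (π m : ℕ)

/-- The subword of the values `< k` has no double descent. -/
def NoDoubleDescentBelow (π : Perm (Fin n)) (k : ℕ) : Prop :=
  ∀ a b c, IsDescentBelow π k a b → ¬ IsDescentBelow π k b c

theorem isSimsun_iff_forall_noDoubleDescentBelow {π : Perm (Fin n)} :
    IsSimsun π ↔ ∀ k, NoDoubleDescentBelow π k := by
  constructor
  · rintro h k a b c ⟨hab, hba, hak, hm⟩ ⟨hbc, hcb, hbk, hm'⟩
    exact h k ⟨a, b, c, hab, hbc, hak, hbk, (Fin.lt_def.1 hcb).trans hbk, hm, hm', hcb, hba⟩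
  · rintro h k ⟨a, b, c, hab, hbc, hak, hbk, -, hm, hm', hcb, hba⟩
    exact h k a b c ⟨hab, hba, hak, hm⟩ ⟨hbc, hcb, hbk, hm'⟩

theorem isDescentBelow_iff_of_le {π : Perm (Fin n)} {k : ℕ} (hk : n ≤ k) {a b : Fin n} :
    IsDescentBelow π k a b ↔ (a : ℕ) + 1 = b ∧ π b < π a := by
  constructor
  · rintro ⟨hab, hba, -, hm⟩
    refine ⟨?_, hba⟩
    by_contra hne
    have := hm ⟨a + 1, by omega⟩ (Fin.lt_def.2 (by simp)) (Fin.lt_def.2 (by simp; omega))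
    omega
  · rintro ⟨hab, hba⟩
    exact ⟨by omega, hba, by omega, fun m _ _ => by omega⟩

theorem noConsecutive_descents_iff {π : Perm (Fin n)} {k : ℕ} (hk : n ≤ k) :
    NoConsecutive (descents π) ↔ NoDoubleDescentBelow π k := by
  simp only [NoConsecutive, NoDoubleDescentBelow, descents, mem_filter_univ,
    isDescentBelow_iff_of_le hk]
  constructor
  · rintro h a b c ⟨hab, hba⟩ ⟨hbc, hcb⟩
    exact h a ⟨b, hab, hba⟩ b ⟨c, hbc, hcb⟩ hab
  · rintro h a ⟨b, hab, hba⟩ b' ⟨c, hbc, hcb⟩ hab'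
    obtain rfl : b = b' := by omega
    exact h a b c ⟨hab, hba⟩ ⟨hbc, hcb⟩

theorem isSimsun_iff_noConsecutive_and_forall_lt {π : Perm (Fin n)} :
    IsSimsun π ↔ NoConsecutive (descents π) ∧ ∀ k < n, NoDoubleDescentBelow π k := by
  rw [isSimsun_iff_forall_noDoubleDescentBelow]
  refine ⟨fun h => ⟨(noConsecutive_descents_iff le_rfl).2 (h n), fun k _ => h k⟩,
    fun ⟨hD, h⟩ k => ?_⟩
  rcases lt_or_ge k n with hk | hk
  · exact h k hk
  · exact (noConsecutive_descents_iff hk).1 hD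

theorem IsSimsun.noConsecutive_descents {π : Perm (Fin n)} (hπ : IsSimsun π) :
    NoConsecutive (descents π) :=
  (isSimsun_iff_noConsecutive_and_forall_lt.1 hπ).1

theorem succ_ne_last_of_mem_descents {π : Perm (Fin n)} {i : Fin n} (hi : i ∈ descents π) :
    i.succ ≠ Fin.last n := by
  obtain ⟨j, hij, -⟩ := (mem_filter_univ i).1 hi
  simp only [ne_eq, Fin.ext_iff, Fin.val_succ, Fin.val_last]
  omega

end Simsun

/-! ### Inserting the maximum into a simsun permutation -/

section InsertMax

variable {n : ℕ} (p : Fin (n + 1))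

theorem val_succAbove_add_one_eq_val_succAbove_iff (i j : Fin n) :
    (p.succAbove i : ℕ) + 1 = p.succAbove j ↔ (i : ℕ) + 1 = j ∧ i.succ ≠ p := by
  simp only [Fin.succAbove, apply_ite Fin.val, Fin.lt_def, ne_eq, Fin.ext_iff, Fin.val_succ,
    Fin.val_castSucc]
  split_ifs <;> omega

theorem val_succAbove_add_one_eq_val_iff (i : Fin n) :
    (p.succAbove i : ℕ) + 1 = p ↔ i.succ = p := by
  simp only [Fin.succAbove, apply_ite Fin.val, Fin.lt_def, Fin.ext_iff, Fin.val_succ,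
    Fin.val_castSucc]
  split_ifs <;> omega

theorem val_add_one_eq_val_succAbove_iff (i : Fin n) :
    (p : ℕ) + 1 = p.succAbove i ↔ i.castSucc = p := by
  simp only [Fin.succAbove, apply_ite Fin.val, Fin.lt_def, Fin.ext_iff, Fin.val_succ,
    Fin.val_castSucc]
  split_ifs <;> omega

variable (π : Perm (Fin n))

/-- The positions at which a new maximum can be inserted into `π` without changing the number of
descents: inside a descent and at the end. -/
def keepingPositions : Finset (Fin (n + 1)) :=
  insert (Fin.last n) ((descents π).map (Fin.succEmb n))

/-- The positions at which a new maximum creates a double descent: right before a descent. -/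
def breakingPositions : Finset (Fin (n + 1)) := (descents π).map Fin.castSuccEmb

/-- The permutation obtained from `π` by inserting a new maximal value at position `p`. -/
abbrev insertMax : Perm (Fin (n + 1)) := insertEntry p (Fin.last n) π

theorem isDescentBelow_insertMax_succAbove {k : ℕ} (hk : k ≤ n) (a b : Fin n) :
    IsDescentBelow (insertMax p π) k (p.succAbove a) (p.succAbove b) ↔ IsDescentBelow π k a b := by
  simp [IsDescentBelow, Fin.forall_iff_succAbove p, hk]

theorem exists_isDescentBelow_of_insertMax {k : ℕ} (hk : k ≤ n) {x y : Fin (n + 1)}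
    (h : IsDescentBelow (insertMax p π) k x y) :
    ∃ a b, p.succAbove a = x ∧ p.succAbove b = y ∧ IsDescentBelow π k a b := by
  obtain ⟨-, hyx, hxk, -⟩ := id h
  have ne_of_lt {z : Fin (n + 1)} (hz : (insertMax p π z : ℕ) < k) : z ≠ p := by
    rintro rfl
    simp only [insertEntry_self, Fin.val_last] at hz
    omega
  obtain ⟨a, rfl⟩ := Fin.exists_succAbove_eq (ne_of_lt hxk)
  obtain ⟨b, rfl⟩ := Fin.exists_succAbove_eq (ne_of_lt ((Fin.lt_def.1 hyx).trans hxk))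
  exact ⟨a, b, rfl, rfl, (isDescentBelow_insertMax_succAbove p π hk a b).1 h⟩

theorem isSimsun_insertMax_iff_noConsecutive :
    IsSimsun (insertMax p π) ↔ IsSimsun π ∧ NoConsecutive (descents (insertMax p π)) := by
  rw [isSimsun_iff_noConsecutive_and_forall_lt, and_comm (a := IsSimsun π)]
  refine and_congr_right fun _ => ⟨fun h => ?_, fun hπ k hk x y z hxy hyz => ?_⟩
  · have transfer {k : ℕ} (hk : k ≤ n) : NoDoubleDescentBelow π k := by
      intro a b c hab
      simp only [← isDescentBelow_insertMax_succAbove p π hk] at hab ⊢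
      exact h k (Nat.lt_succ_of_le hk) _ _ _ hab
    exact isSimsun_iff_noConsecutive_and_forall_lt.2
      ⟨(noConsecutive_descents_iff le_rfl).2 (transfer le_rfl), fun k hk => transfer hk.le⟩
  · have hk := Nat.le_of_lt_succ hk
    obtain ⟨a, b, rfl, rfl, hab⟩ := exists_isDescentBelow_of_insertMax p π hk hxy
    obtain ⟨b', c, hb, rfl, hbc⟩ := exists_isDescentBelow_of_insertMax p π hk hyz
    obtain rfl := Fin.succAbove_right_injective hb
    exact isSimsun_iff_forall_noDoubleDescentBelow.1 hπ k a b' c hab hbc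

theorem mem_descents_insertMax_self : p ∈ descents (insertMax p π) ↔ p ≠ Fin.last n := by
  simp only [descents, mem_filter_univ, Fin.exists_iff_succAbove p, insertEntry_self,
    insertEntry_succAbove, val_add_one_eq_val_succAbove_iff, Fin.succAbove_last,
    Fin.castSucc_lt_last, and_true, lt_irrefl, and_false, false_or, Fin.exists_castSucc_eq]

theorem succAbove_mem_descents_insertMax (i : Fin n) :
    p.succAbove i ∈ descents (insertMax p π) ↔ i ∈ descents π ∧ i.succ ≠ p := by
  simp only [descents, mem_filter_univ, Fin.exists_iff_succAbove p, insertEntry_self,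
    insertEntry_succAbove, val_succAbove_add_one_eq_val_succAbove_iff, Fin.succAbove_last,
    Fin.castSucc_lt_castSucc_iff]
  simp [(Fin.castSucc_lt_last _).not_gt, ← exists_and_right, and_right_comm]

theorem noConsecutive_descents_insertMax_iff (hπ : NoConsecutive (descents π)) :
    NoConsecutive (descents (insertMax p π)) ↔ ∀ i ∈ descents π, i.castSucc ≠ p := by
  constructor
  · rintro h i hi rfl
    refine h _ ((mem_descents_insertMax_self _ π).2 (Fin.castSucc_ne_last i)) _
      ((succAbove_mem_descents_insertMax _ π i).2 ⟨hi, ?_⟩)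
      ((val_add_one_eq_val_succAbove_iff _ i).2 rfl)
    exact i.castSucc_lt_succ.ne'
  · intro h x hx y hy hxy
    obtain hx_eq | ⟨i, rfl⟩ := Fin.eq_self_or_eq_succAbove p x <;>
      obtain hy_eq | ⟨j, rfl⟩ := Fin.eq_self_or_eq_succAbove p y
    · omega
    · subst hx_eq
      rw [succAbove_mem_descents_insertMax] at hy
      exact h j hy.1 ((val_add_one_eq_val_succAbove_iff x j).1 hxy)
    · subst hy_eq
      rw [succAbove_mem_descents_insertMax] at hx
      exact hx.2 ((val_succAbove_add_one_eq_val_iff y i).1 hxy)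
    · rw [succAbove_mem_descents_insertMax] at hx hy
      exact hπ i hx.1 j hy.1 ((val_succAbove_add_one_eq_val_succAbove_iff p i j).1 hxy).1

theorem isSimsun_insertMax_iff :
    IsSimsun (insertMax p π) ↔ IsSimsun π ∧ p ∉ breakingPositions π := by
  rw [isSimsun_insertMax_iff_noConsecutive]
  refine and_congr_right fun hπ => ?_
  simp [breakingPositions, noConsecutive_descents_insertMax_iff p π hπ.noConsecutive_descents]

theorem card_descents_insertMax :
    #(descents (insertMax p π)) =
      if p ∈ keepingPositions π then #(descents π)
      else #(descents π) + 1 := by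
  have card_insertMax : #(descents (insertMax p π)) =
      (if p ≠ Fin.last n then 1 else 0) + #{i ∈ descents π | i.succ ≠ p} := by
    rw [← filter_univ_mem (descents (insertMax p π)), card_filter, Fin.sum_univ_succAbove _ p]
    simp only [mem_descents_insertMax_self, succAbove_mem_descents_insertMax]
    rw [← card_filter, filter_and, filter_univ_mem, inter_filter, inter_univ]
  have card_eq_of_forall (h : ∀ i ∈ descents π, i.succ ≠ p) :
      #{i ∈ descents π | i.succ ≠ p} = #(descents π) := by rw [filter_true_of_mem h]
  by_cases hlast : p = Fin.last n
  · subst hlast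
    simp [keepingPositions, card_insertMax,
      card_eq_of_forall fun _ => succ_ne_last_of_mem_descents]
  by_cases hp : ∃ i ∈ descents π, i.succ = p
  · obtain ⟨i, hi, rfl⟩ := hp
    have filter_eq : {j ∈ descents π | j.succ ≠ i.succ} = (descents π).erase i := by
      ext j
      simp [and_comm]
    rw [card_insertMax, filter_eq, card_erase_of_mem hi, if_pos hlast,
      if_pos (by simp [keepingPositions, hi])]
    have := card_pos.2 ⟨i, hi⟩
    omega
  · push Not at hp
    rw [card_insertMax, card_eq_of_forall hp, if_pos hlast,
      if_neg (by simpa [keepingPositions, hlast] using hp), add_comm]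

end InsertMax

/-! ### Counting the insertions by their descents -/

section SumInsertMax

variable {n : ℕ} {π : Perm (Fin n)}

theorem card_keepingPositions : #(keepingPositions π) = #(descents π) + 1 := by
  rw [keepingPositions, card_insert_of_notMem, card_map]
  simpa using fun _ => succ_ne_last_of_mem_descents

theorem disjoint_keepingPositions_breakingPositions (hπ : NoConsecutive (descents π)) :
    Disjoint (keepingPositions π) (breakingPositions π) := by
  rw [keepingPositions, disjoint_insert_left]
  refine ⟨by simp [breakingPositions, Fin.castSucc_ne_last], ?_⟩
  simp only [breakingPositions, disjoint_left, mem_map]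
  rintro _ ⟨i, hi, rfl⟩ ⟨j, hj, hij⟩
  exact hπ i hi j hj (by simpa using congr(Fin.val $hij).symm)

theorem card_keepingPositions_union_breakingPositions (hπ : NoConsecutive (descents π)) :
    #(keepingPositions π ∪ breakingPositions π) = 2 * #(descents π) + 1 := by
  rw [card_union_of_disjoint (disjoint_keepingPositions_breakingPositions hπ),
    card_keepingPositions, breakingPositions, card_map]
  ring

theorem two_mul_card_descents_le (hπ : NoConsecutive (descents π)) : 2 * #(descents π) ≤ n := by
  have := card_finset_fin_le (keepingPositions π ∪ breakingPositions π)
  rw [card_keepingPositions_union_breakingPositions hπ] at this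
  omega

variable {M : Type*} [AddCommMonoid M]

open Classical in
theorem sum_isSimsun_insertMax (hπ : IsSimsun π) (w : ℕ → M) :
    ∑ p with IsSimsun (insertMax p π), w #(descents (insertMax p π)) =
      (#(descents π) + 1) • w #(descents π) +
        (n - 2 * #(descents π)) • w (#(descents π) + 1) := by
  have allowed_eq : ({p | IsSimsun (insertMax p π)} : Finset (Fin (n + 1))) =
      (breakingPositions π)ᶜ := by
    ext p
    simp [isSimsun_insertMax_iff, hπ]
  have allowed_inter : ({p ∈ (breakingPositions π)ᶜ | p ∈ keepingPositions π} : Finset _) =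
      keepingPositions π := by
    rw [filter_mem_eq_inter, inter_eq_right, subset_compl_iff_disjoint_right]
    exact disjoint_keepingPositions_breakingPositions hπ.noConsecutive_descents
  have allowed_sdiff : ({p ∈ (breakingPositions π)ᶜ | p ∉ keepingPositions π} : Finset _) =
      (keepingPositions π ∪ breakingPositions π)ᶜ := by
    ext
    simp [and_comm]
  simp only [card_descents_insertMax, apply_ite w]
  rw [allowed_eq, sum_ite, sum_const, sum_const, allowed_inter, allowed_sdiff, card_compl,
    card_keepingPositions_union_breakingPositions hπ.noConsecutive_descents,
    card_keepingPositions, Fintype.card_fin, Nat.add_sub_add_right]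

open Classical in
theorem sum_isSimsun_succ (n : ℕ) (w : ℕ → M) :
    ∑ σ : Perm (Fin (n + 1)) with IsSimsun σ, w #(descents σ) =
      ∑ π : Perm (Fin n) with IsSimsun π, ((#(descents π) + 1) • w #(descents π) +
        (n - 2 * #(descents π)) • w (#(descents π) + 1)) := by
  simp only [sum_filter]
  rw [← (insertEntry_bijective (Fin.last n)).sum_comp, Fintype.sum_prod_type_right]
  refine sum_congr rfl fun π _ => ?_
  split_ifs with hπ
  · rw [← sum_isSimsun_insertMax hπ, sum_filter]
  · simp [isSimsun_insertMax_iff, hπ]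

end SumInsertMax

/-! ### Iterated derivatives as sums over simsun permutations -/

open Classical in
theorem iterate_derivation_eq_sum_isSimsun {R A : Type*} [CommSemiring R] [CommSemiring A]
    [Algebra R A] (D : Derivation R A A) {x : A} (hx : D (D x) = x * D x) (n : ℕ) :
    D^[n + 1] x = ∑ π : Perm (Fin n) with IsSimsun π,
      D x ^ (#(descents π) + 1) * x ^ (n - 2 * #(descents π)) := by
  induction n with
  | zero =>
    have isSimsun_one : IsSimsun (1 : Perm (Fin 0)) := fun k ⟨a, _⟩ => a.elim0
    simp [filter_singleton, isSimsun_one, eq_empty_of_isEmpty]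
  | succ n ih =>
    rw [Function.iterate_succ_apply', ih, map_sum,
      sum_isSimsun_succ n fun d => D x ^ (d + 1) * x ^ (n + 1 - 2 * d)]
    refine sum_congr rfl fun π hπ => ?_
    have hle := two_mul_card_descents_le ((mem_filter_univ π).1 hπ).noConsecutive_descents
    generalize #(descents π) = d at hle
    obtain ⟨m, rfl⟩ := Nat.exists_eq_add_of_le hle
    rw [Derivation.leibniz, Derivation.leibniz_pow, Derivation.leibniz_pow, hx,
      show 2 * d + m - 2 * d = m by omega, show 2 * d + m + 1 - 2 * d = m + 1 by omega,
      show 2 * d + m + 1 - 2 * (d + 1) = m - 1 by omega, add_tsub_cancel_right]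
    simp only [smul_eq_mul, nsmul_eq_mul]
    ring

/-- The number of simsun permutations of `{1, …, n}` equals the `(n+1)`-st Euler
number, i.e. the number of up-down permutations of `{1, …, n+1}`. -/
theorem simsun_count_eq_euler (n : ℕ) :
    Nat.card {π : Equiv.Perm (Fin n) // IsSimsun π} =
      Nat.card {π : Equiv.Perm (Fin (n + 1)) // IsUpDown π} := by
  classical
  set h : ℚ⟦X⟧ := egf fun n => (eulerNumber n : ℚ)
  have taylor (k : ℕ) : constantCoeff ((d⁄dX ℚ)^[k] h) = (eulerNumber k : ℚ) :=
    constantCoeff_iterate_derivative_egf _ k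
  have h_zero : constantCoeff h = 1 := by simpa [eulerNumber_zero] using taylor 0
  have h'_zero : constantCoeff (d⁄dX ℚ h) = 1 := by simpa [eulerNumber_one] using taylor 1
  have h_ode : d⁄dX ℚ (d⁄dX ℚ h) = h * d⁄dX ℚ h :=
    derivative_derivative_eq_of_cos_mul_eq (cos_mul_egf_eulerNumber ℚ)
  have expansion := congr(constantCoeff $(iterate_derivation_eq_sum_isSimsun (d⁄dX ℚ) h_ode n))
  simp only [taylor, map_sum, map_mul, map_pow, h_zero, h'_zero, one_pow, mul_one, sum_const,
    nsmul_eq_mul, Nat.cast_inj] at expansion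
  rw [Nat.card_eq_fintype_card, Fintype.card_subtype]
  exact expansion.symm
end

section
/- For every n ≥ 0, the number of simsun permutations of {1,…,n} that avoid the pattern 132 equals the secondary structure number S_n. -/
/-- `π` contains the pattern 132. -/
def Contains132 {n : ℕ} (π : Equiv.Perm (Fin n)) : Prop :=
  ∃ a b c : Fin n, a < b ∧ b < c ∧ π a < π c ∧ π c < π b

/-- The secondary structure numbers: `S 0 = S 1 = 1` and, for `n ≥ 2`,
`S n = S (n-1) + S (n-2) + ∑_{k=0}^{n-3} S k * S (n-3-k)`
(the sum being empty for `n = 2`). -/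
def secStruct : ℕ → ℕ
  | 0 => 1
  | 1 => 1
  | n + 2 => secStruct (n + 1) + secStruct n +
      ∑ k ∈ (Finset.range n).attach, secStruct k * secStruct (n - 1 - k)
decreasing_by
  all_goals first
    | omega
    | (have := Finset.mem_range.mp k.2; omega)

/-!
Around its largest letter `m`, a permutation avoiding 132 splits as `u m v` with every letter of `u`
above every letter of `v`, and both `u` and `v` avoid 132; so these permutations are coded by binary
trees. The word `u m v` is simsun iff `u` and `v` are, `v` does not start with a descent and, when
`v` is nonempty, no subword of the `k` smallest letters of `u` ends with a descent. Each of the two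
descent conditions cuts the simsun words of length `n + 1` down to as many as there are of length
`n`: the words not starting with a descent arise from those of length `n` by inflating the first
letter into an ascending pair, and the words satisfying the condition on `u` by inflating the
minimal letter. Hence the numbers `a n` of simsun words obey
`a (n + 2) = a (n + 1) + a n + ∑ k < n, a k * a (n - 1 - k)`.
-/

section Descents

variable {α β : Type*}

/-- The word `w` has no double descent, i.e. no three consecutive decreasing letters. -/
def NoDoubleDescent [LT α] (w : List α) : Prop :=
  ∀ a b c, [a, b, c] <:+: w → b < a → ¬ c < b

/-- The first two letters of `w` exist and form a descent. -/
def StartsWithDescent [LT α] (w : List α) : Prop :=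
  ∃ a b, [a, b] <+: w ∧ b < a

/-- The last two letters of `w` exist and form a descent. -/
def EndsWithDescent [LT α] (w : List α) : Prop :=
  ∃ a b, [a, b] <:+ w ∧ b < a

@[simp]
lemma not_startsWithDescent_nil [LT α] : ¬ StartsWithDescent ([] : List α) := by
  simp [StartsWithDescent]

lemma NoDoubleDescent.of_isInfix [LT α] {u w : List α} (hw : NoDoubleDescent w) (h : u <:+: w) :
    NoDoubleDescent u :=
  fun a b c habc => hw a b c (habc.trans h)

lemma noDoubleDescent_append [LT α] {u v : List α} :
    NoDoubleDescent (u ++ v) ↔ NoDoubleDescent u ∧ NoDoubleDescent v ∧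
      (∀ a b c, [a] <:+ u → [b, c] <+: v → b < a → ¬ c < b) ∧
      (∀ a b c, [a, b] <:+ u → [c] <+: v → b < a → ¬ c < b) := by
  constructor
  · intro h
    refine ⟨h.of_isInfix ⟨[], v, by simp⟩, h.of_isInfix ⟨u, [], by simp⟩, ?_, ?_⟩
    · rintro a b c ⟨s, rfl⟩ ⟨t, rfl⟩
      exact h a b c ⟨s, t, by simp⟩
    · rintro a b c ⟨s, rfl⟩ ⟨t, rfl⟩
      exact h a b c ⟨s, t, by simp⟩
  · rintro ⟨hu, hv, h₁₂, h₂₁⟩ a b c habc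
    rcases List.infix_append_iff_ne_nil.1 habc with h | h | ⟨s, t, hs, ht, hst, hsu, htv⟩
    · exact hu a b c h
    · exact hv a b c h
    · rcases s with _ | ⟨x, _ | ⟨y, _ | ⟨z, s⟩⟩⟩
      · exact absurd rfl hs
      · obtain ⟨rfl, rfl⟩ : a = x ∧ [b, c] = t := by simpa using hst
        exact h₁₂ a b c hsu htv
      · obtain ⟨rfl, rfl, rfl⟩ : a = x ∧ b = y ∧ [c] = t := by simpa using hst
        exact h₂₁ a b c hsu htv
      · exact absurd hst (by simp [ht])

lemma noDoubleDescent_append_of_lt [Preorder α] {u v : List α} (huv : ∀ x ∈ u, ∀ y ∈ v, y < x) :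
    NoDoubleDescent (u ++ v) ↔ NoDoubleDescent u ∧ NoDoubleDescent v ∧
      (v ≠ [] → ¬ EndsWithDescent u) ∧ (u ≠ [] → ¬ StartsWithDescent v) := by
  rw [noDoubleDescent_append]
  refine and_congr_right fun _ => and_congr_right fun _ => and_comm.trans (and_congr ?_ ?_)
  · constructor
    · rintro h hv ⟨a, b, hu, hba⟩
      obtain ⟨c, v, rfl⟩ := List.exists_cons_of_ne_nil hv
      exact h a b c hu ⟨v, rfl⟩ hba (huv b (hu.subset (by simp)) c (by simp))
    · intro h a b c hu hv hba _
      exact h (List.ne_nil_of_mem (hv.subset (List.mem_singleton_self c))) ⟨a, b, hu, hba⟩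
  · constructor
    · rintro h hu ⟨b, c, hv, hcb⟩
      obtain ⟨u, a, rfl⟩ := u.eq_nil_or_concat'.resolve_left hu
      exact h a b c ⟨u, rfl⟩ hv (huv a (by simp) b (hv.subset (by simp))) hcb
    · intro h a b c hu hv _ hcb
      exact h (List.ne_nil_of_mem (hu.subset (List.mem_singleton_self a))) ⟨b, c, hv, hcb⟩

lemma noDoubleDescent_append_cons_max [Preorder α] {m : α} {u v : List α}
    (hu : ∀ x ∈ u, x < m) (hv : ∀ x ∈ v, x < m) :
    NoDoubleDescent (u ++ m :: v) ↔
      NoDoubleDescent u ∧ NoDoubleDescent v ∧ ¬ StartsWithDescent v := by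
  have hmv : NoDoubleDescent (m :: v) ↔ NoDoubleDescent v ∧ ¬ StartsWithDescent v := by
    rw [← List.singleton_append, noDoubleDescent_append_of_lt (by simpa using hv)]
    have hm : NoDoubleDescent [m] := fun a b c h => absurd h.length_le (by simp)
    have hm' : ¬ EndsWithDescent [m] := fun ⟨a, b, h, _⟩ => absurd h.length_le (by simp)
    simp [hm, hm']
  rw [noDoubleDescent_append, hmv]
  refine and_congr_right fun _ => and_iff_left ⟨fun a b c ha hbc hba => ?_, fun a b c hab hc => ?_⟩
  · obtain rfl : b = m := (List.cons_prefix_cons.1 hbc).1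
    exact absurd hba (hu a (ha.subset (by simp))).asymm
  · obtain rfl : c = m := List.singleton_prefix_cons_iff.1 hc
    exact fun _ => (hu b (hab.subset (by simp))).asymm

lemma startsWithDescent_append_cons_max [Preorder α] {m : α} {u v : List α}
    (hu : ∀ x ∈ u, x < m) (hv : ∀ x ∈ v, x < m) :
    StartsWithDescent (u ++ m :: v) ↔ (u = [] ∧ v ≠ []) ∨ StartsWithDescent u := by
  rcases u with _ | ⟨a, _ | ⟨b, u⟩⟩
  · rcases v with _ | ⟨b, v⟩
    · simp [StartsWithDescent]
    · simpa [StartsWithDescent] using hv b (by simp)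
  · simpa [StartsWithDescent] using (hu a (by simp)).asymm
  · simp [StartsWithDescent]

lemma endsWithDescent_append_pair [LT α] {u : List α} {a b : α} :
    EndsWithDescent (u ++ [a, b]) ↔ b < a := by
  constructor
  · rintro ⟨a', b', ⟨s, hs⟩, hba⟩
    obtain ⟨-, hab⟩ := List.append_inj' hs rfl
    obtain ⟨rfl, rfl⟩ : a' = a ∧ b' = b := by simpa using hab
    exact hba
  · exact fun hba => ⟨a, b, ⟨u, rfl⟩, hba⟩

lemma endsWithDescent_append [LT α] {u v : List α} (hv : 2 ≤ v.length) :
    EndsWithDescent (u ++ v) ↔ EndsWithDescent v := by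
  obtain ⟨v, b, rfl⟩ := v.eq_nil_or_concat'.resolve_left (by rintro rfl; simp at hv)
  obtain ⟨v, a, rfl⟩ := v.eq_nil_or_concat'.resolve_left (by rintro rfl; simp at hv)
  rw [← List.append_assoc, ← List.append_assoc, List.append_assoc (u ++ v), List.append_assoc v]
  exact endsWithDescent_append_pair.trans endsWithDescent_append_pair.symm

lemma endsWithDescent_concat_min [LT α] {u : List α} {b : α} (hu : u ≠ []) (hb : ∀ x ∈ u, b < x) :
    EndsWithDescent (u ++ [b]) := by
  obtain ⟨u, a, rfl⟩ := u.eq_nil_or_concat'.resolve_left hu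
  exact ⟨a, b, ⟨u, by simp⟩, hb a (by simp)⟩

lemma not_endsWithDescent_concat_max [Preorder α] {u : List α} {m : α} (hu : ∀ x ∈ u, x < m) :
    ¬ EndsWithDescent (u ++ [m]) := by
  rintro ⟨a, b, ⟨s, hs⟩, hba⟩
  have hs' : (s ++ [a]) ++ [b] = u ++ [m] := by simpa using hs
  obtain ⟨rfl, hbm⟩ := List.append_inj' hs' rfl
  obtain rfl : b = m := by simpa using hbm
  exact hba.asymm (hu a (by simp))

variable [LinearOrder α] [Preorder β] {f : α → β}

lemma noDoubleDescent_map (hf : StrictMono f) {w : List α} :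
    NoDoubleDescent (w.map f) ↔ NoDoubleDescent w := by
  constructor
  · rintro h a b c ⟨s, t, rfl⟩ hba hcb
    exact h (f a) (f b) (f c) ⟨s.map f, t.map f, by simp⟩ (hf hba) (hf hcb)
  · intro h a' b' c' habc hba hcb
    obtain ⟨l, hl, hmap⟩ := List.infix_map_iff.1 habc
    obtain ⟨a, b, c, rfl⟩ := List.length_eq_three.1 <| by
      simpa using (congrArg List.length hmap).symm
    obtain ⟨rfl, rfl, rfl⟩ : a' = f a ∧ b' = f b ∧ c' = f c := by simpa using hmap
    exact h a b c hl (hf.lt_iff_lt.1 hba) (hf.lt_iff_lt.1 hcb)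

lemma startsWithDescent_map (hf : StrictMono f) {w : List α} :
    StartsWithDescent (w.map f) ↔ StartsWithDescent w := by
  rcases w with _ | ⟨a, _ | ⟨b, w⟩⟩ <;> simp [StartsWithDescent, hf.lt_iff_lt]

lemma endsWithDescent_map (hf : StrictMono f) {w : List α} :
    EndsWithDescent (w.map f) ↔ EndsWithDescent w := by
  constructor
  · rintro ⟨a', b', hab, hba⟩
    obtain ⟨l, hl, hmap⟩ := List.suffix_map_iff.1 hab
    obtain ⟨a, b, rfl⟩ := List.length_eq_two.1 (by simpa using (congrArg List.length hmap).symm)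
    obtain ⟨rfl, rfl⟩ : a' = f a ∧ b' = f b := by simpa using hmap
    exact ⟨a, b, hl, hf.lt_iff_lt.1 hba⟩
  · rintro ⟨a, b, ⟨s, rfl⟩, hba⟩
    exact ⟨f a, f b, ⟨s.map f, by simp⟩, hf hba⟩

end Descents

section SimsunWords

/-- The word `w` is simsun: for every `k`, its subword of letters `< k` has no double descent. -/
def SimsunWord (w : List ℕ) : Prop :=
  ∀ k, NoDoubleDescent (w.filter (· < k))

/-- For no `k` does the subword of letters `< k` of `w` end with a descent. For simsun `w` this says
that `w` stays simsun when a new minimum is appended. -/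
def NeverEndsWithDescent (w : List ℕ) : Prop :=
  ∀ k, ¬ EndsWithDescent (w.filter (· < k))

variable {u v w : List ℕ} {k m : ℕ}

@[simp]
lemma simsunWord_nil : SimsunWord [] := by
  simp [SimsunWord, NoDoubleDescent]

@[simp]
lemma neverEndsWithDescent_nil : NeverEndsWithDescent [] := by
  simp [NeverEndsWithDescent, EndsWithDescent]

lemma filter_lt_eq_self (hw : ∀ x ∈ w, x < k) : w.filter (· < k) = w := by
  simpa using hw

lemma exists_filter_lt_eq_self (w : List ℕ) : ∃ k, w.filter (· < k) = w := by
  obtain ⟨k, hk⟩ := w.toFinset.exists_nat_subset_range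
  exact ⟨k, filter_lt_eq_self fun x hx => Finset.mem_range.1 (hk (List.mem_toFinset.2 hx))⟩

lemma filter_lt_eq_self_of_lt_of_filter_ne_nil (huv : ∀ x ∈ u, ∀ y ∈ v, y < x)
    (hu : u.filter (· < k) ≠ []) : v.filter (· < k) = v := by
  obtain ⟨x, hx⟩ := List.exists_mem_of_ne_nil _ hu
  obtain ⟨hxu, hxk⟩ : x ∈ u ∧ x < k := by simpa using hx
  exact filter_lt_eq_self fun y hy => (huv x hxu y hy).trans hxk

lemma filter_lt_append_cons_max (hkm : k ≤ m) :
    (u ++ m :: v).filter (· < k) = (u ++ v).filter (· < k) := by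
  simp [hkm]

lemma filter_lt_map_add (c k : ℕ) (w : List ℕ) :
    (w.map (c + ·)).filter (· < k) = (w.filter (· < k - c)).map (c + ·) := by
  simp only [List.filter_map, Function.comp_def, Nat.lt_sub_iff_add_lt']

lemma SimsunWord.noDoubleDescent (hw : SimsunWord w) : NoDoubleDescent w := by
  obtain ⟨k, hk⟩ := exists_filter_lt_eq_self w
  exact hk ▸ hw k

lemma simsunWord_map_add (c : ℕ) : SimsunWord (w.map (c + ·)) ↔ SimsunWord w := by
  simp only [SimsunWord, filter_lt_map_add, noDoubleDescent_map (add_right_strictMono (a := c))]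
  exact ⟨fun h k => by simpa using h (c + k), fun h k => h (k - c)⟩

lemma neverEndsWithDescent_map_add (c : ℕ) :
    NeverEndsWithDescent (w.map (c + ·)) ↔ NeverEndsWithDescent w := by
  simp only [NeverEndsWithDescent, filter_lt_map_add,
    endsWithDescent_map (add_right_strictMono (a := c))]
  exact ⟨fun h k => by simpa using h (c + k), fun h k => h (k - c)⟩

lemma simsunWord_append_of_lt (huv : ∀ x ∈ u, ∀ y ∈ v, y < x) :
    SimsunWord (u ++ v) ↔ SimsunWord u ∧ SimsunWord v ∧
      (v ≠ [] → NeverEndsWithDescent u) ∧ (u ≠ [] → ¬ StartsWithDescent v) := by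
  have huv_filter (k : ℕ) : ∀ x ∈ u.filter (· < k), ∀ y ∈ v, y < x :=
    fun x hx => huv x (List.mem_of_mem_filter hx)
  constructor
  · intro h
    refine ⟨fun k => ?_, fun k => ?_, fun hv k hk => ?_, fun hu => ?_⟩
    · exact (h k).of_isInfix (List.filter_append .. ▸ List.infix_append' [] _ _)
    · exact (h k).of_isInfix (List.filter_append .. ▸ (List.suffix_append _ _).isInfix)
    · have hne : u.filter (· < k) ≠ [] := by rintro hnil; simp [hnil, EndsWithDescent] at hk
      have hk' := h k
      rw [List.filter_append, filter_lt_eq_self_of_lt_of_filter_ne_nil huv hne,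
        noDoubleDescent_append_of_lt (huv_filter k)] at hk'
      exact hk'.2.2.1 hv hk
    · exact ((noDoubleDescent_append_of_lt huv).1 h.noDoubleDescent).2.2.2 hu
  · rintro ⟨hu, hv, hend, hstart⟩ k
    rw [List.filter_append]
    by_cases hne : u.filter (· < k) = []
    · simpa [hne] using hv k
    · rw [filter_lt_eq_self_of_lt_of_filter_ne_nil huv hne,
        noDoubleDescent_append_of_lt (huv_filter k)]
      exact ⟨hu k, hv.noDoubleDescent, fun hv => hend hv k,
        fun _ => hstart fun hnil => hne (by simp [hnil])⟩

lemma simsunWord_append_cons_max (hu : ∀ x ∈ u, x < m) (hv : ∀ x ∈ v, x < m) :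
    SimsunWord (u ++ m :: v) ↔ SimsunWord (u ++ v) ∧ ¬ StartsWithDescent v := by
  have huv : ∀ x ∈ u ++ v, x < m := fun x hx => (List.mem_append.1 hx).elim (hu x) (hv x)
  constructor
  · intro h
    refine ⟨fun k => ?_, ((noDoubleDescent_append_cons_max hu hv).1 h.noDoubleDescent).2.2⟩
    rcases le_total k m with hkm | hmk
    · rw [← filter_lt_append_cons_max hkm]
      exact h k
    · rw [filter_lt_eq_self fun x hx => (huv x hx).trans_le hmk, ← filter_lt_eq_self huv]
      rw [← filter_lt_append_cons_max le_rfl]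
      exact h m
  · rintro ⟨h, hstart⟩ k
    rcases le_or_gt k m with hkm | hmk
    · rw [filter_lt_append_cons_max hkm]
      exact h k
    · have hw : ∀ x ∈ u ++ m :: v, x < k := by
        simp only [List.mem_append, List.mem_cons] at huv ⊢
        grind
      rw [filter_lt_eq_self hw, noDoubleDescent_append_cons_max hu hv]
      exact ⟨h.noDoubleDescent.of_isInfix (List.infix_append' [] _ _),
        h.noDoubleDescent.of_isInfix (List.suffix_append _ _).isInfix, hstart⟩

lemma neverEndsWithDescent_concat_max (hu : ∀ x ∈ u, x < m) :
    NeverEndsWithDescent (u ++ [m]) ↔ NeverEndsWithDescent u := by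
  have hfilter {k : ℕ} (hkm : k ≤ m) : (u ++ [m]).filter (· < k) = u.filter (· < k) := by
    rw [filter_lt_append_cons_max hkm, List.append_nil]
  constructor <;> intro h k <;> rcases le_or_gt k m with hkm | hmk
  · exact hfilter hkm ▸ h k
  · rw [filter_lt_eq_self fun x hx => (hu x hx).trans hmk, ← filter_lt_eq_self hu,
      ← hfilter le_rfl]
    exact h m
  · exact hfilter hkm ▸ h k
  · have hw : ∀ x ∈ u ++ [m], x < k := by
      simp only [List.mem_append, List.mem_singleton]
      grind
    rw [filter_lt_eq_self hw]
    exact not_endsWithDescent_concat_max hu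

lemma neverEndsWithDescent_append_of_lt (huv : ∀ x ∈ u, ∀ y ∈ v, y < x) (hv : 2 ≤ v.length) :
    NeverEndsWithDescent (u ++ v) ↔ NeverEndsWithDescent v := by
  refine forall_congr' fun k => ?_
  rw [List.filter_append]
  by_cases hne : u.filter (· < k) = []
  · rw [hne, List.nil_append]
  · rw [filter_lt_eq_self_of_lt_of_filter_ne_nil huv hne, endsWithDescent_append hv]

lemma not_neverEndsWithDescent_concat_min {b : ℕ} (hu : u ≠ []) (hb : ∀ x ∈ u, b < x) :
    ¬ NeverEndsWithDescent (u ++ [b]) := by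
  intro h
  obtain ⟨k, hk⟩ := exists_filter_lt_eq_self (u ++ [b])
  exact h k (hk.symm ▸ endsWithDescent_concat_min hu hb)

end SimsunWords

section TreeWords

open BinaryTree
open scoped List

/-- The word of a binary tree. The largest letter sits at the root, the letters to its right form
the word of the right subtree, and those to its left, all of which are larger, form a shifted copy
of the word of the left subtree. -/
def treeWord : BinaryTree Unit → List ℕ
  | .nil => []
  | .node () l r =>
    (treeWord l).map (r.numNodes + ·) ++ (r.numNodes + l.numNodes) :: treeWord r

@[simp]
lemma treeWord_nil : treeWord .nil = [] :=
  rfl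

lemma treeWord_node (l r : BinaryTree Unit) : treeWord (l △ r) =
    (treeWord l).map (r.numNodes + ·) ++ (r.numNodes + l.numNodes) :: treeWord r :=
  rfl

lemma treeWord_perm_range (t : BinaryTree Unit) :
    treeWord t ~ List.range t.numNodes := by
  induction t using BinaryTree.unitRecOn with
  | base => rfl
  | ind l r hl hr =>
    calc treeWord (l △ r)
        _ ~ (r.numNodes + l.numNodes) :: ((treeWord l).map (r.numNodes + ·) ++ treeWord r) :=
          List.perm_middle
        _ ~ (r.numNodes + l.numNodes) ::
            ((List.range l.numNodes).map (r.numNodes + ·) ++ List.range r.numNodes) :=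
          ((hl.map _).append hr).cons _
        _ ~ List.range (r.numNodes + l.numNodes + 1) := by
          rw [List.range_succ, List.range_add]
          exact (List.perm_append_comm.cons _).trans (List.perm_append_singleton _ _).symm
        _ = List.range (l △ r).numNodes := by rw [numNodes, add_comm r.numNodes]

lemma length_treeWord (t : BinaryTree Unit) : (treeWord t).length = t.numNodes := by
  simpa using (treeWord_perm_range t).length_eq

lemma treeWord_eq_nil {t : BinaryTree Unit} : treeWord t = [] ↔ t = .nil := by
  rw [← List.length_eq_zero_iff, length_treeWord]
  cases t <;> simp [numNodes]

lemma lt_numNodes_of_mem_treeWord {t : BinaryTree Unit} {x : ℕ} (hx : x ∈ treeWord t) :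
    x < t.numNodes :=
  List.mem_range.1 ((treeWord_perm_range t).subset hx)

section Node

variable (l r : BinaryTree Unit)

lemma left_treeWord_lt_root :
    ∀ x ∈ (treeWord l).map (r.numNodes + ·), x < r.numNodes + l.numNodes := by
  simpa using fun x => lt_numNodes_of_mem_treeWord

lemma right_treeWord_lt_root : ∀ x ∈ treeWord r, x < r.numNodes + l.numNodes :=
  fun _ hx => (lt_numNodes_of_mem_treeWord hx).trans_le (Nat.le_add_right _ _)

lemma right_treeWord_lt_left :
    ∀ x ∈ (treeWord l).map (r.numNodes + ·), ∀ y ∈ treeWord r, y < x := by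
  intro x hx y hy
  obtain ⟨z, -, rfl⟩ := List.mem_map.1 hx
  exact (lt_numNodes_of_mem_treeWord hy).trans_le (Nat.le_add_right _ _)

lemma simsunWord_treeWord_node : SimsunWord (treeWord (l △ r)) ↔
    SimsunWord (treeWord l) ∧ SimsunWord (treeWord r) ∧
      (r ≠ .nil → NeverEndsWithDescent (treeWord l)) ∧ ¬ StartsWithDescent (treeWord r) := by
  rw [treeWord_node, simsunWord_append_cons_max (left_treeWord_lt_root l r)
    (right_treeWord_lt_root l r), simsunWord_append_of_lt (right_treeWord_lt_left l r),
    simsunWord_map_add, neverEndsWithDescent_map_add, Ne, treeWord_eq_nil]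
  tauto

lemma startsWithDescent_treeWord_node : StartsWithDescent (treeWord (l △ r)) ↔
    (l = .nil ∧ r ≠ .nil) ∨ StartsWithDescent (treeWord l) := by
  rw [treeWord_node, startsWithDescent_append_cons_max (left_treeWord_lt_root l r)
    (right_treeWord_lt_root l r), startsWithDescent_map add_right_strictMono, List.map_eq_nil_iff,
    Ne, treeWord_eq_nil, treeWord_eq_nil]

lemma neverEndsWithDescent_treeWord_node : NeverEndsWithDescent (treeWord (l △ r)) ↔
    (r = .nil ∧ NeverEndsWithDescent (treeWord l)) ∨
      (2 ≤ r.numNodes ∧ NeverEndsWithDescent (treeWord r)) := by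
  have hroot := left_treeWord_lt_root l r
  have hlt : ∀ x ∈ (treeWord l).map (r.numNodes + ·) ++ [r.numNodes + l.numNodes],
      ∀ y ∈ treeWord r, y < x := by
    simp only [List.mem_append, List.mem_singleton]
    rintro x (hx | rfl) y hy
    exacts [right_treeWord_lt_left l r x hx y hy, right_treeWord_lt_root l r y hy]
  rw [treeWord_node]
  obtain hr | hr | hr : r.numNodes = 0 ∨ r.numNodes = 1 ∨ 2 ≤ r.numNodes := by lia
  · obtain rfl : r = .nil := by rwa [← treeWord_eq_nil, ← List.length_eq_zero_iff, length_treeWord]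
    rw [treeWord, neverEndsWithDescent_concat_max hroot, neverEndsWithDescent_map_add]
    simp
  · obtain ⟨b, hb⟩ := List.length_eq_one_iff.1 ((length_treeWord r).trans hr)
    have hrnil : r ≠ .nil := by rintro rfl; simp at hr
    rw [List.append_cons, hb]
    have hnot := not_neverEndsWithDescent_concat_min
      (List.append_ne_nil_of_right_ne_nil _ (List.cons_ne_nil _ _))
      fun x hx => hlt x hx b (by simp [hb])
    simpa [hr, hrnil] using hnot
  · have hrnil : r ≠ .nil := by rintro rfl; simp at hr
    rw [List.append_cons,
      neverEndsWithDescent_append_of_lt hlt (by rwa [length_treeWord])]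
    simp [hr, hrnil]

end Node

/-- Replace the first letter `a` of `treeWord t` by the pair `a, a + 1` and increase all letters
above `a` by `1`. The empty word becomes the word with one letter. -/
def inflateFirst : BinaryTree Unit → BinaryTree Unit
  | .nil => .nil △ .nil
  | .node () l r => inflateFirst l △ r

/-- Replace the letter `0` of `treeWord t` by the pair `0, 1` and increase all other letters by `1`.
The empty word becomes the word with one letter. -/
def inflateMin : BinaryTree Unit → BinaryTree Unit
  | .nil => .nil △ .nil
  | .node () l .nil => inflateMin l △ .nil
  | .node () l r => l △ inflateMin r

section InflateFirst

lemma inflateFirst_ne_nil (t : BinaryTree Unit) : inflateFirst t ≠ .nil := by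
  cases t <;> simp [inflateFirst]

lemma numNodes_inflateFirst (t : BinaryTree Unit) :
    (inflateFirst t).numNodes = t.numNodes + 1 := by
  induction t using BinaryTree.unitRecOn with
  | base => rfl
  | ind l r hl _ => simp only [inflateFirst, numNodes, hl]; lia

lemma inflateFirst_injective : Function.Injective inflateFirst := by
  intro s t hst
  induction s using BinaryTree.unitRecOn generalizing t with
  | base =>
    cases t with
    | nil => rfl
    | node _ l r => simp [inflateFirst, (inflateFirst_ne_nil l).symm] at hst
  | ind l r hl _ =>
    cases t with
    | nil => simp [inflateFirst, inflateFirst_ne_nil] at hst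
    | node _ l' r' =>
      obtain ⟨-, hll, rfl⟩ := BinaryTree.node.inj hst
      rw [hl hll]

lemma neverEndsWithDescent_inflateFirst {t : BinaryTree Unit} :
    NeverEndsWithDescent (treeWord (inflateFirst t)) ↔ NeverEndsWithDescent (treeWord t) := by
  induction t using BinaryTree.unitRecOn with
  | base => simp [inflateFirst, neverEndsWithDescent_treeWord_node]
  | ind l r hl _ =>
    rw [inflateFirst, neverEndsWithDescent_treeWord_node, hl, neverEndsWithDescent_treeWord_node]

lemma simsunWord_inflateFirst {t : BinaryTree Unit} :
    SimsunWord (treeWord (inflateFirst t)) ↔ SimsunWord (treeWord t) := by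
  induction t using BinaryTree.unitRecOn with
  | base => simp [inflateFirst, simsunWord_treeWord_node]
  | ind l r hl _ =>
    rw [inflateFirst, simsunWord_treeWord_node, hl, neverEndsWithDescent_inflateFirst,
      simsunWord_treeWord_node]

lemma range_inflateFirst :
    Set.range inflateFirst = {t | t ≠ .nil ∧ ¬ StartsWithDescent (treeWord t)} := by
  ext t
  constructor
  · rintro ⟨s, rfl⟩
    refine ⟨inflateFirst_ne_nil s, ?_⟩
    induction s using BinaryTree.unitRecOn with
    | base => simp [inflateFirst, startsWithDescent_treeWord_node]
    | ind l r hl _ =>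
      simpa [inflateFirst, startsWithDescent_treeWord_node, inflateFirst_ne_nil] using hl
  · rintro ⟨hne, hstart⟩
    induction t using BinaryTree.unitRecOn with
    | base => exact absurd rfl hne
    | ind l r hl _ =>
      rw [startsWithDescent_treeWord_node, not_or] at hstart
      by_cases hlnil : l = .nil
      · obtain rfl : r = .nil := by simpa [hlnil] using hstart.1
        exact ⟨.nil, by rw [hlnil]; rfl⟩
      · obtain ⟨s, rfl⟩ := hl hlnil hstart.2
        exact ⟨s △ r, rfl⟩

end InflateFirst

section InflateMin

lemma inflateMin_node {l r : BinaryTree Unit} (hr : r ≠ .nil) :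
    inflateMin (l △ r) = l △ inflateMin r := by
  cases r with
  | nil => exact absurd rfl hr
  | node _ _ _ => rfl

lemma inflateMin_ne_nil (t : BinaryTree Unit) : inflateMin t ≠ .nil := by
  fun_cases inflateMin t <;> simp

lemma numNodes_inflateMin (t : BinaryTree Unit) : (inflateMin t).numNodes = t.numNodes + 1 := by
  fun_induction inflateMin t with
  | case1 => rfl
  | case2 l hl => simp only [numNodes, hl]
  | case3 l r _ hr => simp only [numNodes, hr]; lia

lemma inflateMin_injective : Function.Injective inflateMin := by
  intro s t
  fun_induction inflateMin s generalizing t <;> fun_cases inflateMin t <;>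
    grind [inflateMin_ne_nil]

lemma startsWithDescent_inflateMin {t : BinaryTree Unit} :
    StartsWithDescent (treeWord (inflateMin t)) ↔ StartsWithDescent (treeWord t) := by
  fun_induction inflateMin t with
  | case1 => simp [startsWithDescent_treeWord_node]
  | case2 l hl => simp [startsWithDescent_treeWord_node, hl]
  | case3 l r hr _ =>
    simp [startsWithDescent_treeWord_node, inflateMin_ne_nil, show r ≠ .nil from hr]

lemma simsunWord_inflateMin {t : BinaryTree Unit} :
    SimsunWord (treeWord (inflateMin t)) ↔ SimsunWord (treeWord t) := by
  fun_induction inflateMin t with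
  | case1 => simp [simsunWord_treeWord_node]
  | case2 l hl => simp [simsunWord_treeWord_node, hl]
  | case3 l r hr hrec =>
    simp [simsunWord_treeWord_node, hrec, startsWithDescent_inflateMin, inflateMin_ne_nil,
      show r ≠ .nil from hr]

lemma range_inflateMin :
    Set.range inflateMin = {t | t ≠ .nil ∧ NeverEndsWithDescent (treeWord t)} := by
  ext t
  constructor
  · rintro ⟨s, rfl⟩
    refine ⟨inflateMin_ne_nil s, ?_⟩
    fun_induction inflateMin s with
    | case1 => simp [neverEndsWithDescent_treeWord_node]
    | case2 l hl => simp [neverEndsWithDescent_treeWord_node, hl]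
    | case3 l r hr hrec =>
      have hsize : 2 ≤ (inflateMin r).numNodes := by
        rw [numNodes_inflateMin]
        cases r with
        | nil => exact absurd rfl hr
        | node _ _ _ => simp [numNodes]
      exact (neverEndsWithDescent_treeWord_node _ _).2 (.inr ⟨hsize, hrec⟩)
  · rintro ⟨hne, hend⟩
    induction t using BinaryTree.unitRecOn with
    | base => exact absurd rfl hne
    | ind l r hl hr =>
      rcases (neverEndsWithDescent_treeWord_node l r).1 hend with ⟨rfl, hendl⟩ | ⟨hsize, hendr⟩
      · by_cases hlnil : l = .nil
        · exact ⟨.nil, by rw [hlnil]; rfl⟩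
        · obtain ⟨s, rfl⟩ := hl hlnil hendl
          exact ⟨s △ .nil, rfl⟩
      · have hrnil : r ≠ .nil := by rintro rfl; simp at hsize
        obtain ⟨s, rfl⟩ := hr hrnil hendr
        have hs : s ≠ .nil := by rintro rfl; simp [inflateMin] at hsize
        exact ⟨l △ s, inflateMin_node hs⟩

end InflateMin

end TreeWords

section Counting

open BinaryTree Finset

open scoped Classical in
/-- The number of binary trees with `n` nodes that satisfy `P`. -/
noncomputable def treeCount (P : BinaryTree Unit → Prop) (n : ℕ) : ℕ :=
  #{t ∈ treesOfNumNodesEq n | P t}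

variable {P Q L R : BinaryTree Unit → Prop}

lemma treeCount_zero (hP : P .nil) : treeCount P 0 = 1 := by
  simp [treeCount, filter_singleton, hP]

open scoped Classical in
lemma treeCount_succ (P : BinaryTree Unit → Prop) (n : ℕ) :
    treeCount P (n + 1) = ∑ ij ∈ antidiagonal n,
      #{lr ∈ treesOfNumNodesEq ij.1 ×ˢ treesOfNumNodesEq ij.2 | P (lr.1 △ lr.2)} := by
  rw [treeCount, treesOfNumNodesEq_succ, filter_biUnion, card_biUnion]
  · refine sum_congr rfl fun ij _ => ?_
    rw [filter_map, card_map]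
    rfl
  · simp_rw [Set.PairwiseDisjoint, Set.Pairwise, disjoint_left]
    aesop

lemma treeCount_succ_of_node (hnil : ∀ l, P (l △ .nil) ↔ P l)
    (hnode : ∀ l r, r ≠ .nil → (P (l △ r) ↔ L l ∧ R r)) (n : ℕ) :
    treeCount P (n + 2) =
      treeCount P (n + 1) + ∑ ij ∈ antidiagonal n, treeCount L ij.1 * treeCount R (ij.2 + 1) := by
  classical
  rw [treeCount_succ, Nat.sum_antidiagonal_succ']
  congr 1
  · simp [treeCount, filter_map, hnil]
  · refine sum_congr rfl fun ij _ => ?_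
    rw [treeCount, treeCount, ← card_product, ← filter_product]
    congr 1
    refine filter_congr fun lr hlr => hnode _ _ ?_
    rintro h
    simp [h] at hlr

lemma treeCount_succ_of_range {f : BinaryTree Unit → BinaryTree Unit}
    (hf : Function.Injective f) (hnodes : ∀ t, (f t).numNodes = t.numNodes + 1)
    (hP : ∀ t, P (f t) ↔ P t) (hrange : Set.range f = {t | t ≠ .nil ∧ Q t}) (n : ℕ) :
    treeCount (fun t => P t ∧ Q t) (n + 1) = treeCount P n := by
  classical
  rw [treeCount, treeCount, ← card_image_of_injective {t ∈ treesOfNumNodesEq n | P t} hf]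
  congr 1
  ext t
  simp only [mem_filter, mem_image, mem_treesOfNumNodesEq]
  constructor
  · rintro ⟨ht, hPt, hQt⟩
    have hne : t ≠ .nil := by rintro rfl; simp at ht
    obtain ⟨s, rfl⟩ := hrange.ge ⟨hne, hQt⟩
    exact ⟨s, ⟨by simpa [hnodes] using ht, (hP s).1 hPt⟩, rfl⟩
  · rintro ⟨s, ⟨hs, hPs⟩, rfl⟩
    exact ⟨by rw [hnodes, hs], (hP s).2 hPs, (hrange.le ⟨s, rfl⟩).2⟩

/-- The number of binary trees with `n` nodes whose word is simsun. -/
noncomputable def simsunTreeCount : ℕ → ℕ :=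
  treeCount fun t => SimsunWord (treeWord t)

lemma simsunTreeCount_zero : simsunTreeCount 0 = 1 :=
  treeCount_zero simsunWord_nil

lemma treeCount_neverEndsWithDescent_succ (n : ℕ) :
    treeCount (fun t => SimsunWord (treeWord t) ∧ NeverEndsWithDescent (treeWord t)) (n + 1) =
      simsunTreeCount n :=
  treeCount_succ_of_range inflateMin_injective numNodes_inflateMin
    (fun _ => simsunWord_inflateMin) range_inflateMin n

lemma treeCount_not_startsWithDescent_succ (n : ℕ) :
    treeCount (fun t => SimsunWord (treeWord t) ∧ ¬ StartsWithDescent (treeWord t)) (n + 1) =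
      simsunTreeCount n :=
  treeCount_succ_of_range inflateFirst_injective numNodes_inflateFirst
    (fun _ => simsunWord_inflateFirst) range_inflateFirst n

lemma simsunTreeCount_one : simsunTreeCount 1 = 1 := by
  classical
  simp [simsunTreeCount, treeCount_succ, simsunWord_treeWord_node, filter_singleton]

lemma simsunTreeCount_add_two (n : ℕ) : simsunTreeCount (n + 2) =
    simsunTreeCount (n + 1) + simsunTreeCount n +
      ∑ k ∈ range n, simsunTreeCount k * simsunTreeCount (n - 1 - k) := by
  have hnode (l r : BinaryTree Unit) (hr : r ≠ .nil) : SimsunWord (treeWord (l △ r)) ↔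
      (SimsunWord (treeWord l) ∧ NeverEndsWithDescent (treeWord l)) ∧
        (SimsunWord (treeWord r) ∧ ¬ StartsWithDescent (treeWord r)) := by
    rw [simsunWord_treeWord_node]
    tauto
  rw [simsunTreeCount, treeCount_succ_of_node (fun l => by simp [simsunWord_treeWord_node]) hnode,
    ← simsunTreeCount, add_assoc]
  simp only [treeCount_not_startsWithDescent_succ]
  rw [Nat.sum_antidiagonal_eq_sum_range_succ_mk, sum_range_succ', add_comm (simsunTreeCount n),
    treeCount_zero ⟨simsunWord_nil, neverEndsWithDescent_nil⟩]
  simp only [treeCount_neverEndsWithDescent_succ, one_mul, Nat.sub_zero, Nat.sub_add_eq,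
    Nat.sub_right_comm n]

lemma simsunTreeCount_eq_secStruct (n : ℕ) : simsunTreeCount n = secStruct n := by
  induction n using Nat.strong_induction_on with
  | _ n ih =>
    match n with
    | 0 => rw [simsunTreeCount_zero, secStruct]
    | 1 => rw [simsunTreeCount_one, secStruct]
    | n + 2 =>
      rw [simsunTreeCount_add_two, secStruct, ih _ (by lia), ih _ (by lia),
        sum_attach (range n) fun k => secStruct k * secStruct (n - 1 - k)]
      congr 1
      refine sum_congr rfl fun k hk => ?_
      have hkn := mem_range.1 hk
      rw [ih _ (by lia), ih _ (by lia)]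

end Counting

section Avoids132

open BinaryTree
open scoped List

variable {α : Type*}

/-- The word `w` has no subsequence `x, y, z` with `x < z < y`, i.e. it avoids the pattern 132. -/
def Avoids132 [LT α] (w : List α) : Prop :=
  w.Triplewise fun x y z => ¬ (x < z ∧ z < y)

lemma avoids132_map {β : Type*} [LinearOrder α] [Preorder β] {f : α → β} (hf : StrictMono f)
    {w : List α} : Avoids132 (w.map f) ↔ Avoids132 w := by
  simp only [Avoids132, List.triplewise_map, hf.lt_iff_lt]

lemma avoids132_append_cons_max [LinearOrder α] {m : α} {u v : List α} (hu : ∀ x ∈ u, x < m)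
    (hv : ∀ x ∈ v, x < m) : Avoids132 (u ++ m :: v) ↔
      Avoids132 u ∧ Avoids132 v ∧ ∀ x ∈ u, ∀ z ∈ v, z ≤ x := by
  simp only [Avoids132, List.triplewise_append, List.triplewise_cons, List.pairwise_cons]
  constructor
  · rintro ⟨hu', ⟨-, hv'⟩, hmid, -⟩
    exact ⟨hu', hv', fun x hx z hz => not_lt.1 fun hxz => (hmid x hx).1 z hz ⟨hxz, hv z hz⟩⟩
  · rintro ⟨hu', hv', hle⟩
    refine ⟨hu', ⟨?_, hv'⟩, fun x hx => ⟨?_, ?_⟩, fun z hz => ?_⟩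
    · exact List.pairwise_of_forall_mem_list fun y _ z hz h => h.1.asymm (hv z hz)
    · exact fun z hz h => h.1.not_ge (hle x hx z hz)
    · exact List.pairwise_of_forall_mem_list fun y _ z hz h => h.1.not_ge (hle x hx z hz)
    · refine List.pairwise_of_forall_mem_list fun x hx y hy h => ?_
      rcases List.mem_cons.1 hz with rfl | hz
      · exact h.2.asymm (hu y hy)
      · exact h.1.not_ge (hle x hx z hz)

lemma avoids132_treeWord (t : BinaryTree Unit) : Avoids132 (treeWord t) := by
  induction t using BinaryTree.unitRecOn with
  | base => exact List.Triplewise.nil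
  | ind l r hl hr =>
    rw [treeWord_node, avoids132_append_cons_max (left_treeWord_lt_root l r)
      (right_treeWord_lt_root l r), avoids132_map add_right_strictMono]
    exact ⟨hl, hr, fun x hx z hz => (right_treeWord_lt_left l r x hx z hz).le⟩

lemma treeWord_injective : Function.Injective treeWord := by
  intro s t hst
  induction s using BinaryTree.unitRecOn generalizing t with
  | base => exact (treeWord_eq_nil.1 hst.symm).symm
  | ind l r hl hr =>
    cases t with
    | nil => exact absurd (treeWord_eq_nil.1 hst) (by simp)
    | node _ l' r' =>
      have hroot : r.numNodes + l.numNodes = r'.numNodes + l'.numNodes := by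
        have hlength := congrArg List.length hst
        simp only [length_treeWord, numNodes] at hlength
        lia
      rw [treeWord_node, treeWord_node, ← hroot, List.append_cons_inj_of_notMem
        (fun h => (left_treeWord_lt_root l r _ h).false)
        (fun h => (right_treeWord_lt_root l r _ h).false)] at hst
      obtain ⟨hleft, -, hright⟩ := hst
      obtain rfl := hr hright
      rw [hl ((List.map_injective_iff.2 (add_right_injective _)) hleft)]

lemma perm_range_of_append_perm_range {u v : List ℕ} {n : ℕ} (huv : u ++ v ~ List.range n)
    (hlt : ∀ x ∈ u, ∀ y ∈ v, y < x) :
    v ~ List.range v.length ∧ u ~ (List.range u.length).map (v.length + ·) := by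
  have hu := u.mergeSort_perm (· ≤ ·)
  have hv := v.mergeSort_perm (· ≤ ·)
  have hlength : n = v.length + u.length := by simpa [add_comm] using huv.length_eq.symm
  have hsorted : v.mergeSort (· ≤ ·) ++ u.mergeSort (· ≤ ·) = List.range n := by
    refine List.Perm.eq_of_pairwise' (r := (· ≤ ·)) ?_ List.pairwise_le_range ?_
    · exact List.pairwise_append.2 ⟨v.pairwise_mergeSort' (· ≤ ·), u.pairwise_mergeSort' (· ≤ ·),
        fun y hy x hx => (hlt x (hu.subset hx) y (hv.subset hy)).le⟩
    · exact ((hv.append hu).trans List.perm_append_comm).trans huv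
  rw [hlength, List.range_add] at hsorted
  obtain ⟨hv', hu'⟩ := List.append_inj hsorted (by simp)
  exact ⟨hv' ▸ hv.symm, hu' ▸ hu.symm⟩

lemma exists_map_add_eq_of_perm {u v : List ℕ} {c : ℕ} (hu : u ~ v.map (c + ·)) :
    ∃ w, w ~ v ∧ w.map (c + ·) = u := by
  refine ⟨u.map (· - c), ?_, ?_⟩
  · simpa [Function.comp_def] using hu.map (· - c)
  · rw [List.map_map]
    conv_rhs => rw [← List.map_id u]
    refine List.map_congr_left fun x hx => ?_
    obtain ⟨y, -, rfl⟩ := List.mem_map.1 (hu.subset hx)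
    simp

lemma exists_treeWord_eq {w : List ℕ} (hw : w ~ List.range w.length) (h132 : Avoids132 w) :
    ∃ t, treeWord t = w := by
  induction hn : w.length using Nat.strong_induction_on generalizing w with
  | _ n ih =>
    rw [hn] at hw
    cases n with
    | zero => exact ⟨.nil, (List.length_eq_zero_iff.1 hn).symm⟩
    | succ m =>
      have hm : m ∈ w := hw.symm.subset List.self_mem_range_succ
      obtain ⟨u, v, rfl⟩ := List.append_of_mem hm
      have huv : u ++ v ~ List.range m := by
        rw [List.range_succ] at hw
        exact (List.perm_middle.symm.trans (hw.trans (List.perm_append_singleton _ _))).cons_inv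
      have hmax : ∀ x ∈ u ++ v, x < m := fun x hx => List.mem_range.1 (huv.subset hx)
      have hu : ∀ x ∈ u, x < m := fun x hx => hmax x (List.mem_append_left v hx)
      have hv : ∀ x ∈ v, x < m := fun x hx => hmax x (List.mem_append_right u hx)
      obtain ⟨hu132, hv132, hle⟩ := (avoids132_append_cons_max hu hv).1 h132
      have hdisj : u.Disjoint v :=
        List.disjoint_of_nodup_append (huv.nodup_iff.2 List.nodup_range)
      obtain ⟨hvrange, hurange⟩ := perm_range_of_append_perm_range huv fun x hx z hz =>
        (hle x hx z hz).lt_of_ne fun hzx => hdisj hx (hzx ▸ hz)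
      obtain ⟨u, hu₀, rfl⟩ := exists_map_add_eq_of_perm hurange
      rw [avoids132_map add_right_strictMono] at hu132
      simp only [List.length_append, List.length_cons, List.length_map] at hn hu₀
      obtain ⟨l, rfl⟩ := ih u.length (by lia) hu₀ hu132 rfl
      obtain ⟨r, rfl⟩ := ih v.length (by lia) hvrange hv132 rfl
      refine ⟨l △ r, ?_⟩
      rw [treeWord_node, length_treeWord]
      simp only [length_treeWord] at hn
      congr 2
      lia

end Avoids132

section OneLine

open scoped List

variable {n : ℕ}

/-- The one-line notation of `π`, as a word on `0, …, n - 1`. -/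
def oneLine (π : Equiv.Perm (Fin n)) : List ℕ :=
  List.ofFn fun i => (π i : ℕ)

lemma oneLine_eq_map (π : Equiv.Perm (Fin n)) :
    oneLine π = (List.finRange n).map fun i => (π i : ℕ) :=
  List.ofFn_eq_map

lemma length_oneLine (π : Equiv.Perm (Fin n)) : (oneLine π).length = n :=
  List.length_ofFn

lemma oneLine_injective : Function.Injective (oneLine (n := n)) := by
  intro π σ h
  ext i
  exact congrFun (List.ofFn_injective h) i

lemma oneLine_perm_range (π : Equiv.Perm (Fin n)) : oneLine π ~ List.range n := by
  rw [← List.map_coe_finRange_eq_range, ← List.ofFn_eq_map]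
  exact Equiv.Perm.ofFn_comp_perm π Fin.val

lemma exists_oneLine_eq {w : List ℕ} (hw : w ~ List.range n) :
    ∃ π : Equiv.Perm (Fin n), oneLine π = w := by
  obtain rfl : w.length = n := by simpa using hw.length_eq
  let f (i : Fin w.length) : Fin w.length :=
    ⟨w[i], List.mem_range.1 (hw.subset (List.getElem_mem i.2))⟩
  have hf : Function.Injective f := fun i j hij =>
    List.nodup_iff_injective_get.1 (hw.nodup_iff.2 List.nodup_range) (congrArg Fin.val hij)
  refine ⟨Equiv.ofBijective f (Finite.injective_iff_bijective.1 hf), ?_⟩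
  exact List.ofFn_getElem

lemma avoids132_oneLine (π : Equiv.Perm (Fin n)) : Avoids132 (oneLine π) ↔ ¬ Contains132 π := by
  rw [Avoids132, List.triplewise_iff_getElem]
  simp only [oneLine, List.getElem_ofFn, List.length_ofFn]
  constructor
  · rintro h ⟨a, b, c, hab, hbc, hac, hcb⟩
    exact h a b c hab hbc c.2 ⟨hac, hcb⟩
  · exact fun h i j k hij hjk hk hikj =>
      h ⟨⟨i, by lia⟩, ⟨j, by lia⟩, ⟨k, hk⟩, hij, hjk, hikj⟩

lemma triple_infix_iff_of_pairwise_lt {α : Type*} [LinearOrder α] {w : List α}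
    (hw : w.Pairwise (· < ·)) {a b c : α} :
    [a, b, c] <:+: w ↔ (a ∈ w ∧ b ∈ w ∧ c ∈ w) ∧ a < b ∧ b < c ∧
      (∀ m ∈ w, ¬ (a < m ∧ m < b)) ∧ ∀ m ∈ w, ¬ (b < m ∧ m < c) := by
  constructor
  · rintro ⟨s, t, rfl⟩
    simp only [List.pairwise_append, List.pairwise_cons, List.mem_append, List.mem_cons,
      List.not_mem_nil, or_false, forall_eq_or_imp, forall_eq] at hw ⊢
    obtain ⟨⟨-, ⟨⟨hab, -⟩, hbc, -⟩, hs⟩, -, ht⟩ := hw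
    have hct : ∀ m ∈ t, c < m := ht c (by simp)
    refine ⟨by simp, hab, hbc, ?_, ?_⟩ <;> grind
  · rintro ⟨⟨ha, hb, hc⟩, hab, hbc, hgap, hgap'⟩
    obtain ⟨s, t, rfl⟩ := List.append_of_mem hb
    simp only [List.pairwise_append, List.pairwise_cons, List.mem_append, List.mem_cons] at *
    obtain ⟨hs, ⟨hbt, ht⟩, hst⟩ := hw
    have has : a ∈ s := by grind
    have hct : c ∈ t := by grind
    obtain ⟨s, x, rfl⟩ := s.eq_nil_or_concat'.resolve_left (List.ne_nil_of_mem has)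
    obtain ⟨y, t, rfl⟩ := List.exists_cons_of_ne_nil (List.ne_nil_of_mem hct)
    obtain rfl : a = x := by
      refine (List.mem_append.1 has).elim (fun has' => ?_) List.mem_singleton.1
      exact absurd ⟨(List.pairwise_append.1 hs).2.2 a has' x (by simp),
        hst x (by simp) b (.inl rfl)⟩ (hgap x (by simp))
    obtain rfl : c = y := by
      refine (List.mem_cons.1 hct).elim id fun hct' => ?_
      exact absurd ⟨hbt y (by simp), (List.pairwise_cons.1 ht).1 c hct'⟩ (hgap' y (by simp))
    exact ⟨s, t, by simp⟩

lemma isSimsun_iff (π : Equiv.Perm (Fin n)) : IsSimsun π ↔ SimsunWord (oneLine π) := by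
  refine forall_congr' fun k => ?_
  have hsorted : ((List.finRange n).filter fun i => (π i : ℕ) < k).Pairwise (· < ·) :=
    (List.pairwise_lt_finRange n).filter _
  have hfilter : (oneLine π).filter (· < k) =
      ((List.finRange n).filter fun i => (π i : ℕ) < k).map fun i => (π i : ℕ) := by
    rw [oneLine_eq_map, List.filter_map]
    rfl
  rw [hfilter]
  constructor
  · intro h x y z hxyz hyx hzy
    obtain ⟨l, hl, hmap⟩ := List.infix_map_iff.1 hxyz
    obtain ⟨a, b, c, rfl⟩ := List.length_eq_three.1 <| by
      simpa using (congrArg List.length hmap).symm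
    obtain ⟨rfl, rfl, rfl⟩ : x = π a ∧ y = π b ∧ z = π c := by simpa using hmap
    simp only [triple_infix_iff_of_pairwise_lt hsorted, List.mem_filter, List.mem_finRange,
      true_and, decide_eq_true_eq] at hl
    obtain ⟨⟨ha, hb, hc⟩, hab, hbc, hgap, hgap'⟩ := hl
    exact h ⟨a, b, c, hab, hbc, ha, hb, hc,
      fun m ham hmb => not_lt.1 fun hm => hgap m hm ⟨ham, hmb⟩,
      fun m hbm hmc => not_lt.1 fun hm => hgap' m hm ⟨hbm, hmc⟩, hzy, hyx⟩
  · rintro h ⟨a, b, c, hab, hbc, ha, hb, hc, hgap, hgap', hcb, hba⟩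
    have habc := (triple_infix_iff_of_pairwise_lt hsorted (a := a) (b := b) (c := c)).2 <| by
      simp only [List.mem_filter, List.mem_finRange, true_and, decide_eq_true_eq]
      exact ⟨⟨ha, hb, hc⟩, hab, hbc, fun m hm h => (hgap m h.1 h.2).not_gt hm,
        fun m hm h => (hgap' m h.1 h.2).not_gt hm⟩
    exact h _ _ _ (List.infix_map_iff.2 ⟨_, habc, rfl⟩) hba hcb

lemma card_isSimsun_avoids132 (n : ℕ) :
    Nat.card {π : Equiv.Perm (Fin n) // IsSimsun π ∧ ¬ Contains132 π} = simsunTreeCount n := by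
  have himage : oneLine '' {π : Equiv.Perm (Fin n) | IsSimsun π ∧ ¬ Contains132 π} =
      treeWord '' {t | t ∈ BinaryTree.treesOfNumNodesEq n ∧ SimsunWord (treeWord t)} := by
    ext w
    constructor
    · rintro ⟨π, ⟨hsimsun, h132⟩, rfl⟩
      rw [isSimsun_iff] at hsimsun
      rw [← avoids132_oneLine] at h132
      obtain ⟨t, ht⟩ := exists_treeWord_eq
        (by simpa only [length_oneLine] using oneLine_perm_range π) h132
      refine ⟨t, ⟨?_, ?_⟩, ht⟩
      · rw [BinaryTree.mem_treesOfNumNodesEq, ← length_treeWord, ht, length_oneLine]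
      · rwa [ht]
    · rintro ⟨t, ⟨ht, hsimsun⟩, rfl⟩
      rw [BinaryTree.mem_treesOfNumNodesEq] at ht
      obtain ⟨π, hπ⟩ := exists_oneLine_eq (treeWord_perm_range t)
      subst ht
      refine ⟨π, ⟨?_, ?_⟩, hπ⟩
      · rwa [isSimsun_iff, hπ]
      · rw [← avoids132_oneLine, hπ]
        exact avoids132_treeWord t
  rw [simsunTreeCount, treeCount, ← Set.ncard_coe_finset, Finset.coe_filter,
    ← Set.ncard_image_of_injective _ treeWord_injective, ← himage,
    Set.ncard_image_of_injective _ oneLine_injective]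
  rfl

end OneLine

/-- The number of simsun permutations of `{1, …, n}` avoiding the pattern 132
equals the secondary structure number `S n`. -/
theorem simsun_avoid132_count (n : ℕ) :
    Nat.card {π : Equiv.Perm (Fin n) // IsSimsun π ∧ ¬ Contains132 π} = secStruct n := by
  rw [card_isSimsun_avoids132, simsunTreeCount_eq_secStruct]
end

section
/- For every n ≥ 0, the number of simsun permutations of {1,…,n} that avoid both patterns 132 and 213 equals the Fibonacci number F_{n+1} (with F_1 = F_2 = 1). -/
/-- `π` contains the pattern 213. -/
def Contains213 {n : ℕ} (π : Equiv.Perm (Fin n)) : Prop :=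
  ∃ a b c : Fin n, a < b ∧ b < c ∧ π b < π a ∧ π a < π c

/-!
The first letter of a permutation avoiding 132 and 213 is either its maximum `n` or one less than
its second letter, and conversely prepending such a letter never creates either pattern. In the
presence of 213-avoidance, being simsun amounts to the full word having no double descent.
Prepending a letter just below the first one never creates a double descent, while prepending the
maximum does so exactly when the word starts with a descent. So for `n ≥ 3` a permutation counted
for `n` comes from a unique one counted for `n - 1` by a step of the former kind, or from a unique
one counted for `n - 2` by a step of the former kind followed by a prepended maximum.
-/

open Equiv

/-- A double descent of `f`: three consecutive arguments with strictly decreasing values.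
Consecutive is expressed by the covering relation, so that `f` may be the word of a permutation. -/
def HasDoubleDescent {α β : Type*} [LT α] [LT β] (f : α → β) : Prop :=
  ∃ i j k, i ⋖ j ∧ j ⋖ k ∧ f k < f j ∧ f j < f i

/-- Avoidance of both of the patterns 132 and 213. -/
def Avoids132And213 {n : ℕ} (π : Perm (Fin n)) : Prop :=
  ¬ Contains132 π ∧ ¬ Contains213 π

/-- The set `RS_n(132, 213)` of simsun permutations avoiding 132 and 213, in 0-based form. -/
def simsunAvoiders (n : ℕ) : Set (Perm (Fin n)) :=
  {π | IsSimsun π ∧ ¬ Contains132 π ∧ ¬ Contains213 π}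

section DoubleDescent

variable {n : ℕ} {π : Perm (Fin n)}

theorem IsSimsun.not_hasDoubleDescent (h : IsSimsun π) : ¬ HasDoubleDescent π := by
  rintro ⟨i, j, k, hij, hjk, hkj, hji⟩
  exact h n ⟨i, j, k, hij.lt, hjk.lt, (π i).is_lt, (π j).is_lt, (π k).is_lt,
    fun _ him hmj ↦ absurd hmj (hij.2 him), fun _ hjm hmk ↦ absurd hmk (hjk.2 hjm), hkj, hji⟩

theorem isSimsun_of_not_hasDoubleDescent (h213 : ¬ Contains213 π) (h : ¬ HasDoubleDescent π) :
    IsSimsun π := by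
  rintro k ⟨a, b, c, hab, hbc, ha, hb, -, large_ab, large_bc, hcb, hba⟩
  have b_covBy_c : b ⋖ c := by
    by_contra hcov
    -- A letter between `b` and `c` is at least `k`, so it exceeds `π a` and completes a 213.
    obtain ⟨m, hbm, hmc⟩ := exists_lt_lt_of_not_covBy hbc hcov
    exact h213 ⟨a, b, m, hab, hbm, hba, ha.trans_le (large_bc m hbm hmc)⟩
  obtain ⟨m, ham, m_covBy_b⟩ := exists_le_covBy_of_lt hab
  have hbm : π b < π m := by
    rcases ham.eq_or_lt with rfl | ham
    · exact hba
    · exact hb.trans_le (large_ab m ham m_covBy_b.lt)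
  exact h ⟨m, b, c, m_covBy_b, b_covBy_c, hcb, hbm⟩

theorem mem_simsunAvoiders_iff :
    π ∈ simsunAvoiders n ↔ Avoids132And213 π ∧ ¬ HasDoubleDescent π :=
  ⟨fun ⟨hs, hav⟩ ↦ ⟨hav, hs.not_hasDoubleDescent⟩,
    fun ⟨hav, hdd⟩ ↦ ⟨isSimsun_of_not_hasDoubleDescent hav.2 hdd, hav⟩⟩

end DoubleDescent

section Prepend

/-- The permutation whose one-line notation is `p` followed by that of `σ`, the entries `≥ p` of
`σ` being raised by one. -/
def prepend {n : ℕ} (p : Fin (n + 1)) (σ : Perm (Fin n)) : Perm (Fin (n + 1)) :=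
  (finSuccEquiv n).trans ((optionCongr σ).trans (finSuccEquiv' p).symm)

variable {n : ℕ}

@[simp]
theorem prepend_zero (p : Fin (n + 1)) (σ : Perm (Fin n)) : prepend p σ 0 = p := by
  simp [prepend]

@[simp]
theorem prepend_succ (p : Fin (n + 1)) (σ : Perm (Fin n)) (i : Fin n) :
    prepend p σ i.succ = p.succAbove (σ i) := by
  simp [prepend]

theorem prepend_inj {p q : Fin (n + 1)} {σ τ : Perm (Fin n)} :
    prepend p σ = prepend q τ ↔ p = q ∧ σ = τ := by
  refine ⟨fun h ↦ ?_, by rintro ⟨rfl, rfl⟩; rfl⟩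
  obtain rfl : p = q := by simpa using DFunLike.congr_fun h 0
  exact ⟨rfl, Equiv.ext fun i ↦ by simpa using DFunLike.congr_fun h i.succ⟩

theorem exists_eq_prepend (π : Perm (Fin (n + 1))) : ∃ p σ, π = prepend p σ := by
  let f : Fin (n + 1) × Perm (Fin n) → Perm (Fin (n + 1)) := fun x ↦ prepend x.1 x.2
  have f_injective : Function.Injective f := fun _ _ h ↦ Prod.ext_iff.2 (prepend_inj.1 h)
  have f_bijective : Function.Bijective f :=
    (Fintype.bijective_iff_injective_and_card f).2
      ⟨f_injective, by simp [Fintype.card_perm, Nat.factorial_succ]⟩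
  obtain ⟨x, hx⟩ := f_bijective.surjective π
  exact ⟨x.1, x.2, hx.symm⟩

theorem contains132_prepend_iff {p : Fin (n + 1)} {σ : Perm (Fin n)} :
    Contains132 (prepend p σ) ↔
      (∃ b c, b < c ∧ p ≤ (σ c).castSucc ∧ σ c < σ b) ∨ Contains132 σ := by
  simp [Contains132, Fin.exists_fin_succ, Fin.lt_succAbove_iff_le_castSucc]

theorem contains213_prepend_iff {p : Fin (n + 1)} {σ : Perm (Fin n)} :
    Contains213 (prepend p σ) ↔
      (∃ b c, b < c ∧ (σ b).castSucc < p ∧ p ≤ (σ c).castSucc) ∨ Contains213 σ := by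
  simp [Contains213, Fin.exists_fin_succ, Fin.lt_succAbove_iff_le_castSucc,
    Fin.succAbove_lt_iff_castSucc_lt]

theorem hasDoubleDescent_prepend_iff {p : Fin (n + 3)} {σ : Perm (Fin (n + 2))} :
    HasDoubleDescent (prepend p σ) ↔
      (σ 1 < σ 0 ∧ (σ 0).castSucc < p) ∨ HasDoubleDescent σ := by
  simp [HasDoubleDescent, Fin.exists_fin_succ, Fin.succAbove_lt_iff_castSucc_lt]

theorem eq_last_or_eq_castSucc_of_avoids_prepend {p : Fin (n + 2)} {σ : Perm (Fin (n + 1))}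
    (h : Avoids132And213 (prepend p σ)) : p = Fin.last _ ∨ p = (σ 0).castSucc := by
  by_contra! hp
  obtain ⟨p_ne_last, p_ne_first⟩ := hp
  obtain ⟨q, rfl⟩ := Fin.exists_castSucc_eq.2 p_ne_last
  have q_ne_first : q ≠ σ 0 := fun hq ↦ p_ne_first (congrArg _ hq)
  -- The letters `q`, `σ 0` and the letter raised from `q` form a 132 or a 213.
  obtain ⟨j, rfl⟩ := σ.surjective q
  have j_pos : 0 < j := Fin.pos_iff_ne_zero.2 fun hj ↦ q_ne_first (congrArg σ hj)
  rcases q_ne_first.lt_or_gt with hlt | hgt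
  · exact h.1 (contains132_prepend_iff.2 (.inl ⟨0, j, j_pos, le_rfl, hlt⟩))
  · exact h.2 (contains213_prepend_iff.2 (.inl ⟨0, j, j_pos, hgt, le_rfl⟩))

theorem avoids_prepend_last_iff {σ : Perm (Fin n)} :
    Avoids132And213 (prepend (Fin.last n) σ) ↔ Avoids132And213 σ := by
  simp [Avoids132And213, contains132_prepend_iff, contains213_prepend_iff, Fin.last_le_iff]

theorem avoids_prepend_castSucc_iff {σ : Perm (Fin (n + 1))} :
    Avoids132And213 (prepend (σ 0).castSucc σ) ↔ Avoids132And213 σ := by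
  have pos_of_ne {b : Fin (n + 1)} (hb : σ b ≠ σ 0) : 0 < b :=
    Fin.pos_iff_ne_zero.2 fun h ↦ hb (congrArg σ h)
  have first_lt {c : Fin (n + 1)} (hc : 0 < c) (hle : σ 0 ≤ σ c) : σ 0 < σ c :=
    hle.lt_of_ne (σ.injective.ne hc.ne)
  -- A pattern starting at the new letter also occurs starting at `σ 0`.
  have h132 : Contains132 (prepend (σ 0).castSucc σ) ↔ Contains132 σ := by
    rw [contains132_prepend_iff, or_iff_right_of_imp]
    rintro ⟨b, c, hbc, hle, hcb⟩
    rw [Fin.castSucc_le_castSucc_iff] at hle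
    have hb := pos_of_ne (hle.trans_lt hcb).ne'
    exact ⟨0, b, c, hb, hbc, first_lt (hb.trans hbc) hle, hcb⟩
  have h213 : Contains213 (prepend (σ 0).castSucc σ) ↔ Contains213 σ := by
    rw [contains213_prepend_iff, or_iff_right_of_imp]
    rintro ⟨b, c, hbc, hlt, hle⟩
    have hb := pos_of_ne (ne_of_lt hlt)
    exact ⟨0, b, c, hb, hbc, hlt, first_lt (hb.trans hbc) hle⟩
  rw [Avoids132And213, h132, h213, Avoids132And213]

end Prepend

section Recursion

variable {n : ℕ}

/-- The permutation obtained by prepending a new maximum. -/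
def prependMax (σ : Perm (Fin n)) : Perm (Fin (n + 1)) :=
  prepend (Fin.last n) σ

/-- The permutation obtained by prepending the predecessor of the first entry, which is itself
raised by one along with all larger entries. -/
def prependPred (σ : Perm (Fin (n + 1))) : Perm (Fin (n + 2)) :=
  prepend (σ 0).castSucc σ

theorem prependMax_injective : Function.Injective (prependMax (n := n)) :=
  fun _ _ h ↦ (prepend_inj.1 h).2

theorem prependPred_injective : Function.Injective (prependPred (n := n)) :=
  fun _ _ h ↦ (prepend_inj.1 h).2

theorem prependPred_ne_prependMax (σ τ : Perm (Fin (n + 1))) : prependPred σ ≠ prependMax τ :=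
  fun h ↦ (Fin.castSucc_lt_last _).ne (prepend_inj.1 h).1

theorem prependPred_zero_lt_one (σ : Perm (Fin (n + 1))) : prependPred σ 0 < prependPred σ 1 := by
  rw [prependPred, ← Fin.succ_zero_eq_one, prepend_zero, prepend_succ,
    Fin.lt_succAbove_iff_le_castSucc]

theorem prependMax_one_lt_zero (σ : Perm (Fin (n + 1))) : prependMax σ 1 < prependMax σ 0 := by
  rw [prependMax, ← Fin.succ_zero_eq_one, prepend_zero, prepend_succ, Fin.succAbove_last]
  exact Fin.castSucc_lt_last _

theorem exists_eq_prependMax_or_prependPred {π : Perm (Fin (n + 2))} (h : Avoids132And213 π) :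
    ∃ σ, π = prependMax σ ∨ π = prependPred σ := by
  obtain ⟨p, σ, rfl⟩ := exists_eq_prepend π
  rcases eq_last_or_eq_castSucc_of_avoids_prepend h with rfl | rfl
  exacts [⟨σ, .inl rfl⟩, ⟨σ, .inr rfl⟩]

theorem simsunAvoiders_eq_univ (hn : n ≤ 2) : simsunAvoiders n = Set.univ := by
  have no_three (a b c : Fin n) (hab : a < b) (hbc : b < c) : False := by omega
  exact Set.eq_univ_of_forall fun π ↦
    ⟨fun _ ⟨a, b, c, hab, hbc, _⟩ ↦ no_three a b c hab hbc,
      fun ⟨a, b, c, hab, hbc, _⟩ ↦ no_three a b c hab hbc,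
      fun ⟨a, b, c, hab, hbc, _⟩ ↦ no_three a b c hab hbc⟩

theorem prependPred_mem_simsunAvoiders_iff {σ : Perm (Fin (n + 1))} :
    prependPred σ ∈ simsunAvoiders (n + 2) ↔ σ ∈ simsunAvoiders (n + 1) := by
  cases n with
  | zero => simp [simsunAvoiders_eq_univ]
  | succ n =>
    simp [mem_simsunAvoiders_iff, prependPred, avoids_prepend_castSucc_iff,
      hasDoubleDescent_prepend_iff]

theorem prependMax_mem_simsunAvoiders_iff {σ : Perm (Fin (n + 2))} :
    prependMax σ ∈ simsunAvoiders (n + 3) ↔ σ 0 < σ 1 ∧ σ ∈ simsunAvoiders (n + 2) := by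
  have hne : σ 0 ≠ σ 1 := σ.injective.ne Fin.zero_ne_one
  simp [mem_simsunAvoiders_iff, prependMax, avoids_prepend_last_iff, hasDoubleDescent_prepend_iff,
    Fin.castSucc_lt_last, and_left_comm, hne.le_iff_lt]

theorem simsunAvoiders_add_three (n : ℕ) :
    simsunAvoiders (n + 3) =
      prependPred '' simsunAvoiders (n + 2) ∪
        (prependMax ∘ prependPred) '' simsunAvoiders (n + 1) := by
  ext π
  constructor
  · intro hπ
    obtain ⟨σ, rfl | rfl⟩ := exists_eq_prependMax_or_prependPred (mem_simsunAvoiders_iff.1 hπ).1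
    · obtain ⟨hasc, hσ⟩ := prependMax_mem_simsunAvoiders_iff.1 hπ
      obtain ⟨τ, rfl | rfl⟩ := exists_eq_prependMax_or_prependPred (mem_simsunAvoiders_iff.1 hσ).1
      · exact absurd hasc (prependMax_one_lt_zero τ).not_gt
      · exact .inr ⟨τ, prependPred_mem_simsunAvoiders_iff.1 hσ, rfl⟩
    · exact .inl ⟨σ, prependPred_mem_simsunAvoiders_iff.1 hπ, rfl⟩
  · rintro (⟨σ, hσ, rfl⟩ | ⟨τ, hτ, rfl⟩)
    · exact prependPred_mem_simsunAvoiders_iff.2 hσ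
    · exact prependMax_mem_simsunAvoiders_iff.2
        ⟨prependPred_zero_lt_one τ, prependPred_mem_simsunAvoiders_iff.2 hτ⟩

theorem ncard_simsunAvoiders_add_three (n : ℕ) :
    (simsunAvoiders (n + 3)).ncard =
      (simsunAvoiders (n + 2)).ncard + (simsunAvoiders (n + 1)).ncard := by
  have images_disjoint : Disjoint (prependPred '' simsunAvoiders (n + 2))
      ((prependMax ∘ prependPred) '' simsunAvoiders (n + 1)) := by
    rw [Set.disjoint_left]
    rintro _ ⟨σ, -, rfl⟩ ⟨τ, -, h⟩
    exact prependPred_ne_prependMax _ _ h.symm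
  rw [simsunAvoiders_add_three, Set.ncard_union_eq images_disjoint,
    Set.ncard_image_of_injective _ prependPred_injective,
    Set.ncard_image_of_injective _ (prependMax_injective.comp prependPred_injective)]

theorem ncard_simsunAvoiders_of_le_two (hn : n ≤ 2) :
    (simsunAvoiders n).ncard = n.factorial := by
  rw [simsunAvoiders_eq_univ hn, Set.ncard_univ, Nat.card_perm, Nat.card_fin]

theorem ncard_simsunAvoiders : ∀ n : ℕ, (simsunAvoiders n).ncard = Nat.fib (n + 1)
  | 0 | 1 | 2 => ncard_simsunAvoiders_of_le_two (by decide)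
  | n + 3 => by
    rw [ncard_simsunAvoiders_add_three, ncard_simsunAvoiders (n + 2),
      ncard_simsunAvoiders (n + 1), Nat.fib_add_two (n := n + 2), add_comm]

end Recursion

/-- The number of simsun permutations of `{1, …, n}` avoiding both 132 and 213
equals the Fibonacci number `F (n+1)` (with `F 1 = F 2 = 1`). -/
theorem simsun_avoid132_213_count (n : ℕ) :
    Nat.card {π : Equiv.Perm (Fin n) //
      IsSimsun π ∧ ¬ Contains132 π ∧ ¬ Contains213 π} = Nat.fib (n + 1) :=
  ncard_simsunAvoiders n
end
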